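/- There exist absolute constants q₀, c₁ > 0, c₂ > 0 and C > 0 such that the following holds. Let χ be a real Dirichlet character of conductor q ≥ q₀ (i.e. χ is a primitive real-valued Dirichlet character modulo q), let 0 < δ < 1, and suppose L(1−δ, χ) = 0. Then there exists a real u ≥ 2 with c₁·log q ≤ log u ≤ c₂·log q such that G(e^{2u}) ≥ C·u/(δ·log u). -/

import Mathlib

/-!
The idea is that a zero of `L(s, χ)` very close to `1` makes the primes `p` with `χ(p) = 1` scarce,
and a reduced class modulo `q` with few primes gives an unusually efficient sieve covering of a long
interval, hence a long gap between primes.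

**Scarcity.** The function `1 * χ` is nonnegative and multiplicative, at least `1` at squares, and
equal to `2` at primes with `χ(p) = 1`. If `L(1-δ, χ) = 0`, the hyperbola method gives
`∑_{n ≤ N} (1 * χ)(n) n^{δ-1} = L(1, χ) N^δ / δ + error` (`sum_divSum_asymp`), the second main term
having been cancelled by the zero. Effective bounds `L(1, χ) ≥ 1 / (300 q³)` (`L_one_lower`) and
`L(1, χ) ≤ 2 q δ` (`L_one_upper`) show that the error is negligible for `N` a large power of `q`.
If `δ log q` is small, then `N^δ` is nearly constant for `q^40 ≤ N ≤ q^120`, so there is little mass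
between these points. But a prime `p ∈ (q^40, q^80]` with `χ(p) = 1` multiplies the integers up to
`q^40` into that range, which forces `∑ 1 / p ≪ δ log q` over such primes (`primeSum_le`).

**A class with few primes.** Two applications of the pigeonhole principle give `Y ≥ q^39` and a
reduced class `b` modulo `q` such that `q k + b` is prime for only `O(δ Y q / φ(q))` of the
`k ∈ [Y, 2Y)` (`exists_dyadic_scale`, `exists_good_class`).

**Sieving.** The interval `[Y, 2Y)` is covered by one residue class for each prime up to
`u = 4000 δ Y log q` (`exists_cover`). Primes not dividing `q` up to `√(2 q Y)` cover all `k` with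
`q k + b` composite; the primes dividing `q`, chosen greedily, reduce the remaining set by the factor
`φ(q) / q` to `O(δ Y)` elements; and there are enough primes up to `u` to cover these one at a time.
The Chinese remainder theorem turns the covering into `Y` consecutive composite numbers below
`exp (2 u)` (`le_primeGap_of_cover`), and `Y ≫ u / (δ log u)`.

If `δ log q` is not small, the trivial covering of `[2, u)` with `u = q` suffices.
-/

/-- `primeGap X` is the largest gap `p' - p` between consecutive primes `p < p' ≤ X`. -/
noncomputable def primeGap (X : ℝ) : ℕ :=
  sSup {d : ℕ | ∃ p p' : ℕ, p.Prime ∧ p'.Prime ∧ p < p' ∧ (p' : ℝ) ≤ X ∧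
    (∀ r : ℕ, p < r → r < p' → ¬ r.Prime) ∧ d = p' - p}

/-- Jacobsthal's function: the maximal gap between consecutive positive integers
having no prime factor `p ≤ u`. -/
noncomputable def jacobsthal (u : ℝ) : ℕ :=
  sSup {d : ℕ | ∃ n n' : ℕ, 0 < n ∧ n < n' ∧
    (∀ p : ℕ, p.Prime → (p : ℝ) ≤ u → ¬ p ∣ n) ∧
    (∀ p : ℕ, p.Prime → (p : ℝ) ≤ u → ¬ p ∣ n') ∧
    (∀ m : ℕ, n < m → m < n' → ∃ p : ℕ, p.Prime ∧ (p : ℝ) ≤ u ∧ p ∣ m) ∧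
    d = n' - n}

/-- `primesInAP x q b` is the number of primes `p ≤ x` with `p ≡ b (mod q)`. -/
noncomputable def primesInAP (x : ℝ) (q b : ℕ) : ℕ :=
  ((Finset.Icc 1 ⌊x⌋₊).filter (fun p => p.Prime ∧ p % q = b % q)).card

/-- `leastPrime q b` is the least prime `p` with `p ≡ b (mod q)`. -/
noncomputable def leastPrime (q b : ℕ) : ℕ :=
  sInf {p : ℕ | p.Prime ∧ p % q = b % q}

open Filter Topology

/-! ### Partial summation -/

/-- Partial summation: if all block sums of `f` are at most `Q` in absolute value, and `g` is
nonnegative and decreasing beyond `M`, then the sum of `f * g` over a block starting after `M` is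
at most `Q * g (M + 1)`. -/
theorem abel_bound {f : ℕ → ℝ} {Q : ℝ} (hf : ∀ M N, |∑ n ∈ Finset.Ioc M N, f n| ≤ Q)
    {g : ℕ → ℝ} {M : ℕ} (hg0 : ∀ n, M < n → 0 ≤ g n)
    (hg : ∀ n, M < n → g (n + 1) ≤ g n) (N : ℕ) :
    |∑ n ∈ Finset.Ioc M N, f n * g n| ≤ Q * g (M + 1) := by
  have hQ : 0 ≤ Q := (abs_nonneg _).trans (hf 0 0)
  rcases le_or_gt N M with h | h
  · simp [Finset.Ioc_eq_empty_of_le h]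
    exact mul_nonneg hQ (hg0 _ (Nat.lt_succ_self _))
  have key : ∀ N, M ≤ N → ∑ n ∈ Finset.Ioc M N, f n * g n =
      ∑ n ∈ Finset.Ioc M N, (∑ k ∈ Finset.Ioc M n, f k) * (g n - g (n + 1)) +
        (∑ k ∈ Finset.Ioc M N, f k) * g (N + 1) := by
    intro N hN
    induction N, hN using Nat.le_induction with
    | base => simp
    | succ N hN ih =>
      rw [Finset.sum_Ioc_succ_top hN, ih, Finset.sum_Ioc_succ_top hN (f := fun n => _ * _),
        Finset.sum_Ioc_succ_top hN f]
      ring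
  have tel : ∀ N, M ≤ N → ∑ n ∈ Finset.Ioc M N, (g n - g (n + 1)) = g (M + 1) - g (N + 1) := by
    intro N hN
    induction N, hN using Nat.le_induction with
    | base => simp
    | succ N hN ih =>
      rw [Finset.sum_Ioc_succ_top hN, ih]
      ring
  rw [key N h.le]
  calc _ ≤ ∑ n ∈ Finset.Ioc M N, |(∑ k ∈ Finset.Ioc M n, f k) * (g n - g (n + 1))| +
        |(∑ k ∈ Finset.Ioc M N, f k) * g (N + 1)| :=
        (abs_add_le _ _).trans (add_le_add_left (Finset.abs_sum_le_sum_abs _ _) _)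
    _ ≤ ∑ n ∈ Finset.Ioc M N, Q * (g n - g (n + 1)) + Q * g (N + 1) := by
        refine add_le_add (Finset.sum_le_sum fun n hn => ?_) ?_
        · have hn' := (Finset.mem_Ioc.1 hn).1
          rw [abs_mul, abs_of_nonneg (sub_nonneg.2 (hg n hn'))]
          exact mul_le_mul_of_nonneg_right (hf _ _) (sub_nonneg.2 (hg n hn'))
        · rw [abs_mul, abs_of_nonneg (hg0 (N + 1) (by omega))]
          exact mul_le_mul_of_nonneg_right (hf _ _) (hg0 (N + 1) (by omega))
    _ = Q * g (M + 1) := by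
        rw [← Finset.mul_sum, tel N h.le]
        ring

/-- The bound of `abel_bound` for the tail of a convergent series `∑ f n * g n` with sum `L`. -/
theorem abel_tail {f : ℕ → ℝ} {Q : ℝ} (hf : ∀ M N, |∑ n ∈ Finset.Ioc M N, f n| ≤ Q)
    {g : ℕ → ℝ} {M : ℕ} (hg0 : ∀ n, M < n → 0 ≤ g n)
    (hg : ∀ n, M < n → g (n + 1) ≤ g n) {L : ℝ}
    (hL : Filter.Tendsto (fun N => ∑ n ∈ Finset.Ioc 0 N, f n * g n) Filter.atTop (nhds L)) :
    |∑ n ∈ Finset.Ioc 0 M, f n * g n - L| ≤ Q * g (M + 1) := by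
  have h1 : Filter.Tendsto (fun N => |∑ n ∈ Finset.Ioc 0 M, f n * g n -
      ∑ n ∈ Finset.Ioc 0 N, f n * g n|) Filter.atTop
      (nhds |∑ n ∈ Finset.Ioc 0 M, f n * g n - L|) :=
    (tendsto_const_nhds.sub hL).abs
  refine le_of_tendsto h1 ?_
  filter_upwards [Filter.eventually_ge_atTop M] with N hN
  rw [← Finset.sum_Ioc_consecutive _ (Nat.zero_le M) hN, sub_add_cancel_left, abs_neg]
  exact abel_bound hf hg0 hg N

/-! ### Convergence of the Dirichlet series in the half-plane `0 < Re s` -/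

theorem norm_cpow_sub_succ_le {s : ℂ} (hs : 0 < s.re) {n : ℕ} (hn : 0 < n) :
    ‖(n : ℂ) ^ (-s) - ((n + 1 : ℕ) : ℂ) ^ (-s)‖ ≤ ‖s‖ * (n : ℝ) ^ (-s.re - 1) := by
  have hn' : (0 : ℝ) < n := by exact_mod_cast hn
  have h := Convex.norm_image_sub_le_of_norm_hasDerivWithin_le (𝕜 := ℝ)
    (f := fun x : ℝ => (x : ℂ) ^ (-s)) (f' := fun x : ℝ => (-s) * (x : ℂ) ^ (-s - 1))
    (s := Set.Icc (n : ℝ) (n + 1)) (x := (n : ℝ) + 1) (y := n) (C := ‖s‖ * (n : ℝ) ^ (-s.re - 1))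
    ?_ ?_ (convex_Icc _ _) ?_ ?_
  · simpa using h
  · intro x hx
    have hx0 : 0 < x := hn'.trans_le hx.1
    have hs0 : -s ≠ 0 := by
      intro h
      rw [neg_eq_zero] at h
      simp [h] at hs
    exact (hasDerivAt_ofReal_cpow_const hx0.ne' hs0).hasDerivWithinAt
  · intro x hx
    have hx0 : 0 < x := hn'.trans_le hx.1
    rw [norm_mul, norm_neg, Complex.norm_cpow_eq_rpow_re_of_pos hx0]
    simp only [Complex.sub_re, Complex.neg_re, Complex.one_re]
    exact mul_le_mul_of_nonneg_left
      (Real.rpow_le_rpow_of_nonpos hn' hx.1 (by linarith)) (norm_nonneg _)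
  · simp
  · simp

theorem abel_identity {R : Type*} [CommRing R] (f g : ℕ → R) (N : ℕ) :
    ∑ n ∈ Finset.Ioc 0 N, f n * g n =
      ∑ n ∈ Finset.range N, (∑ k ∈ Finset.Ioc 0 (n + 1), f k) * (g (n + 1) - g (n + 2)) +
        (∑ k ∈ Finset.Ioc 0 N, f k) * g (N + 1) := by
  induction N with
  | zero => simp
  | succ N ih =>
    rw [Finset.sum_Ioc_succ_top (Nat.zero_le N), ih, Finset.sum_range_succ,
      Finset.sum_Ioc_succ_top (Nat.zero_le N) f]
    ring

/-- The partial sums of `∑ χ(n) n⁻ˢ` converge to Mathlib's (analytically continued) `L(s, χ)` in the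
whole half-plane `0 < Re s`, for `χ ≠ 1`. Partial summation writes the limit as a locally uniformly
convergent series of holomorphic functions, which agrees with `L(s, χ)` near `s = 2` and hence, by
the identity theorem, on the whole region. -/
theorem tendsto_LFunction {q : ℕ} [NeZero q] (χ : DirichletCharacter ℂ q) (hχ : χ ≠ 1) {Q : ℝ}
    (hQ : ∀ N : ℕ, ‖∑ n ∈ Finset.Ioc 0 N, χ (n : ZMod q)‖ ≤ Q) {s : ℂ} (hs : 0 < s.re) :
    Tendsto (fun N : ℕ => ∑ n ∈ Finset.Ioc 0 N, χ (n : ZMod q) * (n : ℂ) ^ (-s)) atTop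
      (𝓝 (χ.LFunction s)) := by
  have hQ0 : 0 ≤ Q := (norm_nonneg _).trans (hQ 0)
  set F : ℕ → ℂ → ℂ := fun n w => (∑ k ∈ Finset.Ioc 0 (n + 1), χ (k : ZMod q)) *
    (((n + 1 : ℕ) : ℂ) ^ (-w) - ((n + 2 : ℕ) : ℂ) ^ (-w)) with hF
  -- a convex bounded region containing `s` and `2`
  set ε : ℝ := min s.re 1 / 2 with hε
  have hε0 : 0 < ε := by positivity
  set R : ℝ := ‖s‖ + 3 with hR
  set U : Set ℂ := {w : ℂ | ε < w.re} ∩ Metric.ball 0 R with hU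
  have hUo : IsOpen U := (isOpen_lt continuous_const Complex.continuous_re).inter Metric.isOpen_ball
  have hUc : Convex ℝ U := (convex_halfSpace_re_gt ε).inter (convex_ball _ _)
  have hsU : s ∈ U := by
    refine ⟨?_, ?_⟩
    · have := min_le_left s.re 1
      simp only [Set.mem_ofPred_eq, hε]
      linarith
    · simp [hR]
  have h2U : (2 : ℂ) ∈ U := by
    refine ⟨?_, ?_⟩
    · have := min_le_right s.re 1
      simp only [Set.mem_ofPred_eq, hε]
      norm_num
      linarith
    · simp [hR]
      linarith [norm_nonneg s]
  set v : ℕ → ℝ := fun n => Q * R * ((n + 1 : ℕ) : ℝ) ^ (-ε - 1) with hv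
  have hvs : Summable v := by
    refine Summable.mul_left _ ?_
    exact (summable_nat_add_iff (f := fun n : ℕ => (n : ℝ) ^ (-ε - 1)) 1).2
      (Real.summable_nat_rpow.2 (by linarith))
  have hFv : ∀ (n : ℕ) (w : ℂ), w ∈ U → ‖F n w‖ ≤ v n := by
    intro n w hw
    have hw1 : ε < w.re := hw.1
    have hw2 : ‖w‖ < R := by simpa using hw.2
    have h1 := norm_cpow_sub_succ_le (s := w) (hε0.trans hw1) (n := n + 1) (Nat.succ_pos n)
    simp only [hF, norm_mul, hv]
    rw [mul_assoc]
    refine mul_le_mul (hQ _) (h1.trans ?_) (norm_nonneg _) hQ0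
    refine mul_le_mul hw2.le ?_ (by positivity) (by positivity)
    exact Real.rpow_le_rpow_of_exponent_le (by simp) (by linarith)
  have hlim : ∀ w ∈ U, Tendsto (fun N : ℕ => ∑ n ∈ Finset.Ioc 0 N, χ (n : ZMod q) * (n : ℂ) ^ (-w))
      atTop (𝓝 (∑' n, F n w)) := by
    intro w hw
    have hw1 : ε < w.re := hw.1
    have hsum : Summable (fun n => F n w) := Summable.of_norm_bounded hvs (fun n => hFv n w hw)
    have h1 := hsum.hasSum.tendsto_sum_nat
    have h2 : Tendsto (fun N : ℕ => (∑ k ∈ Finset.Ioc 0 N, χ (k : ZMod q)) *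
        ((N + 1 : ℕ) : ℂ) ^ (-w)) atTop (𝓝 0) := by
      have h3 : Tendsto (fun N : ℕ => Q * ((N + 1 : ℕ) : ℝ) ^ (-w.re)) atTop (𝓝 0) := by
        rw [← mul_zero Q]
        refine Tendsto.const_mul Q ?_
        exact (tendsto_rpow_neg_atTop (hε0.trans hw1)).comp
          ((tendsto_natCast_atTop_atTop).comp (tendsto_add_atTop_nat 1))
      refine squeeze_zero_norm (fun N => ?_) h3
      rw [norm_mul, Complex.norm_natCast_cpow_of_pos (Nat.succ_pos N)]
      exact mul_le_mul_of_nonneg_right (hQ N) (by positivity)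
    have h4 := h1.add h2
    rw [add_zero] at h4
    refine h4.congr fun N => ?_
    exact (abel_identity (fun n => χ (n : ZMod q)) (fun n => (n : ℂ) ^ (-w)) N).symm
  have hd : DifferentiableOn ℂ (fun w => ∑' n, F n w) U := by
    refine Complex.differentiableOn_tsum_of_summable_norm hvs (fun n => ?_) hUo hFv
    refine Differentiable.differentiableOn ?_
    simp only [hF]
    refine Differentiable.const_mul (Differentiable.sub ?_ ?_) _
    · exact Differentiable.const_cpow (by fun_prop)
        (Or.inl (Nat.cast_ne_zero.2 (Nat.succ_ne_zero n)))
    · exact Differentiable.const_cpow (by fun_prop)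
        (Or.inl (Nat.cast_ne_zero.2 (Nat.succ_ne_zero (n + 1))))
  have heq : Set.EqOn (fun w => ∑' n, F n w) χ.LFunction U := by
    refine (hd.analyticOnNhd hUo).eqOn_of_preconnected_of_eventuallyEq
      ((DirichletCharacter.differentiable_LFunction hχ).differentiableOn.analyticOnNhd hUo)
      hUc.isPreconnected h2U ?_
    have hn1 : {w : ℂ | 1 < w.re} ∈ 𝓝 (2 : ℂ) :=
      (isOpen_lt continuous_const Complex.continuous_re).mem_nhds (by simp)
    filter_upwards [hn1, hUo.mem_nhds h2U] with w hw hwU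
    have hw' : 1 < w.re := hw
    rw [DirichletCharacter.LFunction_eq_LSeries χ hw']
    refine tendsto_nhds_unique (hlim w hwU) ?_
    have hs1 : LSeriesSummable (fun n => χ (n : ZMod q)) w :=
      DirichletCharacter.LSeriesSummable_of_one_lt_re χ hw'
    have h5 := (hs1.hasSum.tendsto_sum_nat).comp (tendsto_add_atTop_nat 1)
    refine h5.congr fun N => ?_
    simp only [Function.comp_apply]
    rw [Finset.sum_range_succ', LSeries.term_zero, add_zero]
    have : Finset.Ioc 0 N = (Finset.range N).map (addRightEmbedding 1) := by
      rw [Finset.range_eq_Ico, Finset.map_add_right_Ico]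
      ext; simp; omega
    rw [this, Finset.sum_map]
    refine Finset.sum_congr rfl fun n hn => ?_
    rw [LSeries.term_of_ne_zero (Nat.succ_ne_zero n), Complex.cpow_neg]
    rfl
  have := hlim s hsU
  rw [← heq hsU]
  exact this

/-! ### Real characters and the convolution `1 * χ` -/

/-- The real part of `χ` as a function on `ℕ`; for a real character this is `χ` itself. -/
noncomputable def realChar {q : ℕ} (χ : DirichletCharacter ℂ q) (n : ℕ) : ℝ :=
  (χ (n : ZMod q)).re

/-- The divisor sum `∑_{d ∣ n} f d`; for `f = χ` this is the convolution `1 * χ`. -/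
noncomputable def divSum (f : ℕ → ℝ) (n : ℕ) : ℝ := ∑ d ∈ n.divisors, f d

/-- The properties of a nontrivial real Dirichlet character modulo `q` that enter the analytic part
of the argument; `bound` bounds the character sums over arbitrary blocks. -/
structure IsRealChar (f : ℕ → ℝ) (q : ℕ) : Prop where
  one : f 1 = 1
  mul : ∀ m n, f (m * n) = f m * f n
  val : ∀ n, f n = 0 ∨ f n = 1 ∨ f n = -1
  bound : ∀ M N, |∑ n ∈ Finset.Ioc M N, f n| ≤ q

theorem ofReal_realChar {q : ℕ} {χ : DirichletCharacter ℂ q} (hreal : ∀ a : ZMod q, (χ a).im = 0)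
    (n : ℕ) : ((realChar χ n : ℝ) : ℂ) = χ (n : ZMod q) :=
  Complex.ext (by simp [realChar]) (by simp [hreal])

section

variable {q : ℕ} [NeZero q] {χ : DirichletCharacter ℂ q}

theorem sum_period (hχ : χ ≠ 1) (M : ℕ) : ∑ n ∈ Finset.Ioc M (M + q), χ (n : ZMod q) = 0 := by
  have h0 : ∑ n ∈ Finset.range q, χ (n : ZMod q) = 0 := by
    rw [← MulChar.sum_eq_zero_of_ne_one hχ]
    refine Finset.sum_nbij (fun n => (n : ZMod q)) (by simp) ?_ ?_ (by simp)
    · intro a ha b hb hab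
      simp only [Finset.coe_range, Set.mem_Iio] at ha hb
      have := (ZMod.natCast_eq_natCast_iff' a b q).1 hab
      rwa [Nat.mod_eq_of_lt ha, Nat.mod_eq_of_lt hb] at this
    · intro a _
      exact ⟨a.val, by simpa using ZMod.val_lt a, by simp⟩
  induction M with
  | zero =>
    have h1 := Finset.sum_range_succ (fun n : ℕ => χ (n : ZMod q)) q
    have h2 := Finset.sum_range_succ' (fun n : ℕ => χ (n : ZMod q)) q
    have h3 : ∑ n ∈ Finset.Ioc 0 (0 + q), χ (n : ZMod q) =
        ∑ n ∈ Finset.range q, χ ((n + 1 : ℕ) : ZMod q) := by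
      have : Finset.Ioc 0 (0 + q) = (Finset.range q).map (addRightEmbedding 1) := by
        rw [Finset.range_eq_Ico, Finset.map_add_right_Ico]
        ext; simp; omega
      rw [this, Finset.sum_map]
      rfl
    rw [h3]
    rw [h0, h2] at h1
    simpa using h1
  | succ M ih =>
    have hq : 0 < q := Nat.pos_of_ne_zero (NeZero.ne q)
    have h1 : ∑ n ∈ Finset.Ioc M (M + 1 + q), χ (n : ZMod q) = _ :=
      (Finset.sum_Ioc_consecutive (fun n : ℕ => χ (n : ZMod q)) (Nat.le_succ M)
      (by omega : M + 1 ≤ M + 1 + q)).symm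
    have h2 : ∑ n ∈ Finset.Ioc M (M + q + 1), χ (n : ZMod q) = _ :=
      Finset.sum_Ioc_succ_top (by omega : M ≤ M + q) (fun n : ℕ => χ (n : ZMod q))
    rw [show M + 1 + q = M + q + 1 by omega] at h1 ⊢
    rw [h1, ih] at h2
    have h3 : ∑ n ∈ Finset.Ioc M M.succ, χ (n : ZMod q) = χ ((M + 1 : ℕ) : ZMod q) := by
      simp
    rw [h3] at h2
    have h4 : ((M + q + 1 : ℕ) : ZMod q) = ((M + 1 : ℕ) : ZMod q) := by simp
    rw [h4, zero_add] at h2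
    simpa using h2

theorem isRealChar_realChar (hχ : χ ≠ 1) (hreal : ∀ a : ZMod q, (χ a).im = 0) :
    IsRealChar (realChar χ) q where
  one := by simp [realChar]
  mul m n := by
    have : ((realChar χ (m * n) : ℝ) : ℂ) = ((realChar χ m * realChar χ n : ℝ) : ℂ) := by
      rw [Complex.ofReal_mul]
      simp only [ofReal_realChar hreal]
      simp
    exact_mod_cast this
  val n := by
    by_cases h : IsUnit (n : ZMod q)
    · right
      have h1 : ‖χ (n : ZMod q)‖ = 1 := by
        obtain ⟨u, hu⟩ := h
        rw [← hu]
        exact DirichletCharacter.unit_norm_eq_one χ u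
      rw [← ofReal_realChar hreal, Complex.norm_real, Real.norm_eq_abs] at h1
      exact eq_or_eq_neg_of_abs_eq h1
    · left
      simp [realChar, MulChar.map_nonunit χ h]
  bound := by
    have hq : 0 < q := Nat.pos_of_ne_zero (NeZero.ne q)
    have hle : ∀ n, |realChar χ n| ≤ 1 := fun n =>
      (Complex.abs_re_le_norm _).trans (DirichletCharacter.norm_le_one χ _)
    have hper : ∀ M, ∑ n ∈ Finset.Ioc M (M + q), realChar χ n = 0 := by
      intro M
      have := congrArg Complex.re (sum_period (χ := χ) hχ M)
      simpa [realChar] using this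
    have key : ∀ k M N, N ≤ M + k → |∑ n ∈ Finset.Ioc M N, realChar χ n| ≤ q := by
      intro k
      induction k using Nat.strong_induction_on with
      | _ k ih =>
        intro M N hN
        by_cases h : N < M + q
        · calc _ ≤ ∑ n ∈ Finset.Ioc M N, |realChar χ n| := Finset.abs_sum_le_sum_abs _ _
            _ ≤ ∑ n ∈ Finset.Ioc M N, (1 : ℝ) := Finset.sum_le_sum fun n _ => hle n
            _ = ((N - M : ℕ) : ℝ) := by simp
            _ ≤ q := by exact_mod_cast (by omega)
        · rw [← Finset.sum_Ioc_consecutive _ (by omega : M ≤ M + q) (by omega : M + q ≤ N), hper,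
            zero_add]
          exact ih (k - q) (by omega) _ _ (by omega)
    exact fun M N => key N M N (by omega)

theorem tendsto_real (hχ : χ ≠ 1) (hreal : ∀ a : ZMod q, (χ a).im = 0) {σ : ℝ} (hσ : 0 < σ) :
    Tendsto (fun N : ℕ => ∑ n ∈ Finset.Ioc 0 N, realChar χ n * (n : ℝ) ^ (-σ)) atTop
      (𝓝 (χ.LFunction σ).re) := by
  have h := tendsto_LFunction χ hχ (Q := q) (fun N => by
    have := (isRealChar_realChar hχ hreal).bound 0 N
    simp only [← ofReal_realChar hreal]
    rw [← Complex.ofReal_sum, Complex.norm_real]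
    exact this) (s := (σ : ℂ)) (by simpa using hσ)
  have h2 := (Complex.continuous_re.tendsto _).comp h
  refine h2.congr fun N => ?_
  simp only [Function.comp_apply, Complex.re_sum]
  refine Finset.sum_congr rfl fun n _ => ?_
  rw [← ofReal_realChar hreal]
  have : ((n : ℂ)) ^ (-(σ : ℂ)) = (((n : ℝ) ^ (-σ) : ℝ) : ℂ) := by
    rw [Complex.ofReal_cpow (Nat.cast_nonneg n)]
    simp
  rw [this, ← Complex.ofReal_mul, Complex.ofReal_re]
end

namespace IsRealChar
variable {f : ℕ → ℝ} {q : ℕ}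

theorem map_pow (h : IsRealChar f q) (p i : ℕ) : f (p ^ i) = f p ^ i := by
  induction i with
  | zero => simp [h.one]
  | succ i ih => rw [pow_succ, h.mul, ih, pow_succ]

theorem divSum_mul (h : IsRealChar f q) {m n : ℕ} (hmn : m.Coprime n) :
    divSum f (m * n) = divSum f m * divSum f n := by
  unfold divSum
  rw [Nat.divisors_mul, Finset.mul_def, Finset.sum_image hmn.mul_injOn_divisors,
    Finset.sum_product, Finset.sum_mul_sum]
  simp only [h.mul]

/-- On prime powers `1 * χ` is a geometric sum with ratio `χ(p) ∈ {0, 1, -1}`; with `divSum_mul` this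
gives nonnegativity everywhere and a lower bound at squares. -/
theorem divSum_prime_pow (h : IsRealChar f q) {p : ℕ} (hp : p.Prime) (k : ℕ) :
    0 ≤ divSum f (p ^ k) ∧ (Even k → 1 ≤ divSum f (p ^ k)) := by
  unfold divSum
  rw [Nat.sum_divisors_prime_pow hp]
  simp only [h.map_pow]
  rcases h.val p with h0 | h0 | h0
  · rw [h0]
    have : ∑ k ∈ Finset.range (k + 1), (0 : ℝ) ^ k = 1 := by
      rw [Finset.sum_range_succ']
      simp
    rw [this]
    simp
  · rw [h0]
    simp
    positivity
  · rw [h0, neg_one_geom_sum]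
    refine ⟨by split_ifs <;> simp, fun hk => ?_⟩
    rw [if_neg]
    rw [Nat.not_even_iff_odd]
    exact hk.add_one

theorem divSum_nonneg (h : IsRealChar f q) (n : ℕ) : 0 ≤ divSum f n := by
  induction n using Nat.recOnPosPrimePosCoprime with
  | prime_pow p k hp hk => exact (h.divSum_prime_pow hp k).1
  | zero => simp [divSum]
  | one => simp [divSum, h.one]
  | coprime a b ha hb hab iha ihb =>
    rw [h.divSum_mul hab]
    exact mul_nonneg iha ihb

theorem one_le_divSum_sq (h : IsRealChar f q) {m : ℕ} (hm : 0 < m) : 1 ≤ divSum f (m ^ 2) := by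
  induction m using Nat.recOnPosPrimePosCoprime with
  | prime_pow p k hp hk =>
    rw [← pow_mul]
    exact (h.divSum_prime_pow hp (k * 2)).2 (by simp)
  | zero => simp at hm
  | one => simp [divSum, h.one]
  | coprime a b ha hb hab iha ihb =>
    rw [mul_pow, h.divSum_mul (hab.pow 2 2)]
    exact one_le_mul_of_one_le_of_one_le (iha (by omega)) (ihb (by omega))

theorem divSum_prime (h : IsRealChar f q) {p : ℕ} (hp : p.Prime) : divSum f p = 1 + f p := by
  rw [divSum, hp.sum_divisors, h.one, add_comm]

end IsRealChar

/-- Dirichlet's rearrangement of a weighted divisor-sum over `n ≤ N` according to the divisor. -/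
theorem sum_divSum_mul (f W : ℕ → ℝ) (N : ℕ) :
    ∑ n ∈ Finset.Ioc 0 N, divSum f n * W n =
      ∑ b ∈ Finset.Ioc 0 N, f b * ∑ a ∈ Finset.Ioc 0 (N / b), W (a * b) := by
  simp only [divSum, Finset.sum_mul, Finset.mul_sum]
  rw [Finset.sum_sigma', Finset.sum_sigma']
  refine Finset.sum_bij' (fun x _ => ⟨x.2, x.1 / x.2⟩) (fun x _ => ⟨x.2 * x.1, x.1⟩) ?_ ?_ ?_ ?_ ?_
  · rintro ⟨n, d⟩ h
    simp only [Finset.mem_sigma, Finset.mem_Ioc, Nat.mem_divisors] at h ⊢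
    obtain ⟨⟨hn, hN⟩, hd, hn0⟩ := h
    have hd0 := Nat.pos_of_dvd_of_pos hd hn
    exact ⟨⟨hd0, (Nat.le_of_dvd hn hd).trans hN⟩, Nat.div_pos (Nat.le_of_dvd hn hd) hd0,
      Nat.div_le_div_right hN⟩
  · rintro ⟨b, a⟩ h
    simp only [Finset.mem_sigma, Finset.mem_Ioc, Nat.mem_divisors] at h ⊢
    obtain ⟨⟨hb, hN⟩, ha, haN⟩ := h
    have := (Nat.le_div_iff_mul_le hb).1 haN
    exact ⟨⟨by positivity, this⟩, Dvd.intro_left a rfl, by positivity⟩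
  · rintro ⟨n, d⟩ h
    simp only [Finset.mem_sigma, Finset.mem_Ioc, Nat.mem_divisors] at h ⊢
    simp [Nat.div_mul_cancel h.2.1]
  · rintro ⟨b, a⟩ h
    simp only [Finset.mem_sigma, Finset.mem_Ioc] at h ⊢
    simp [Nat.mul_div_cancel a h.1.1]
  · rintro ⟨n, d⟩ h
    simp only [Finset.mem_sigma, Finset.mem_Ioc, Nat.mem_divisors] at h ⊢
    simp [Nat.div_mul_cancel h.2.1]

/-! ### Effective bounds for `L(1, χ)` -/

/-- The hyperbola method: the divisors `b > y` contribute at most `q` times the first inner sum. -/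
theorem hyperbola {f : ℕ → ℝ} {q : ℕ} (hf : IsRealChar f q) {W : ℕ → ℝ} {N y : ℕ} (hy : y ≤ N)
    (hW0 : ∀ n, 0 < n → n ≤ N → 0 ≤ W n)
    (hW : ∀ m n, 0 < m → m ≤ n → n ≤ N → W n ≤ W m) :
    |∑ n ∈ Finset.Ioc 0 N, divSum f n * W n -
      ∑ b ∈ Finset.Ioc 0 y, f b * ∑ a ∈ Finset.Ioc 0 (N / b), W (a * b)| ≤
      q * ∑ a ∈ Finset.Ioc 0 (N / (y + 1)), W (a * (y + 1)) := by
  have hmem : ∀ b a, 0 < b → a ∈ Finset.Ioc 0 (N / b) → 0 < a * b ∧ a * b ≤ N := by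
    intro b a hb ha
    have ha' := Finset.mem_Ioc.1 ha
    exact ⟨Nat.mul_pos ha'.1 hb, (Nat.le_div_iff_mul_le hb).1 ha'.2⟩
  rw [sum_divSum_mul, ← Finset.sum_Ioc_consecutive _ (Nat.zero_le y) hy, add_sub_cancel_left]
  refine abel_bound (g := fun b => ∑ a ∈ Finset.Ioc 0 (N / b), W (a * b)) hf.bound
    (fun b hb => ?_) (fun b hb => ?_) N
  · exact Finset.sum_nonneg fun a ha =>
      hW0 _ (hmem b a (by omega) ha).1 (hmem b a (by omega) ha).2
  · have hb0 : 0 < b := by omega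
    calc ∑ a ∈ Finset.Ioc 0 (N / (b + 1)), W (a * (b + 1))
        ≤ ∑ a ∈ Finset.Ioc 0 (N / (b + 1)), W (a * b) := by
          refine Finset.sum_le_sum fun a ha => ?_
          have h1 := hmem (b + 1) a (by omega) ha
          have ha0 := (Finset.mem_Ioc.1 ha).1
          exact hW _ _ (by positivity) (Nat.mul_le_mul_left a (Nat.le_succ b)) h1.2
      _ ≤ ∑ a ∈ Finset.Ioc 0 (N / b), W (a * b) := by
          refine Finset.sum_le_sum_of_subset_of_nonneg ?_ ?_
          · exact Finset.Ioc_subset_Ioc_right (Nat.div_le_div_left (Nat.le_succ b) hb0)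
          · intro a ha _
            exact hW0 _ (hmem b a hb0 ha).1 (hmem b a hb0 ha).2

theorem sum_Ioc_linear (k : ℕ) (c : ℝ) :
    ∑ a ∈ Finset.Ioc 0 k, (1 - (a : ℝ) * c) = k - k * (k + 1) / 2 * c := by
  induction k with
  | zero => simp
  | succ k ih =>
    rw [Finset.sum_Ioc_succ_top (Nat.zero_le k), ih]
    push_cast
    ring

/-- The inner sum for the Cesàro weight `1 - n / N`, with `x = N / b`, is `(x - 1) / 2` up to
`1 / (2 x)`. -/
theorem cesaro_inner {N b : ℕ} (hb : 0 < b) (hbN : b ≤ N) :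
    ((N : ℝ) / b - 1) / 2 ≤ ∑ a ∈ Finset.Ioc 0 (N / b), (1 - ((a * b : ℕ) : ℝ) / N) ∧
    ∑ a ∈ Finset.Ioc 0 (N / b), (1 - ((a * b : ℕ) : ℝ) / N) ≤
      ((N : ℝ) / b - 1) / 2 + b / (2 * N) := by
  have hb' : (0 : ℝ) < b := by exact_mod_cast hb
  have hN' : (0 : ℝ) < N := by exact_mod_cast hb.trans_le hbN
  set k := N / b with hk
  have h1 : (k : ℝ) * b ≤ N := by exact_mod_cast Nat.div_mul_le_self N b
  have h2 : (N : ℝ) < (k + 1) * b := by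
    have := Nat.lt_div_mul_add (a := N) hb
    rw [← hk] at this
    have : (N : ℝ) < k * b + b := by exact_mod_cast this
    linarith
  have h3 : ∑ a ∈ Finset.Ioc 0 k, (1 - ((a * b : ℕ) : ℝ) / N) =
      k - k * (k + 1) / 2 * (b / N) := by
    rw [← sum_Ioc_linear]
    refine Finset.sum_congr rfl fun a _ => ?_
    push_cast
    ring
  rw [h3]
  have h4 : (k : ℝ) - k * (k + 1) / 2 * (b / N) - ((N : ℝ) / b - 1) / 2 =
      (N - k * b) * ((k + 1) * b - N) / (2 * N * b) := by
    field_simp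
    ring
  constructor
  · rw [← sub_nonneg, h4]
    exact div_nonneg (mul_nonneg (by linarith) (by linarith)) (by positivity)
  · have h5 : (N - k * b) * ((k + 1) * b - N) / (2 * N * b) ≤ (b : ℝ) / (2 * N) := by
      rw [div_le_div_iff₀ (by positivity) (by positivity)]
      have : ((N : ℝ) - k * b) * ((k + 1) * b - N) ≤ b * b :=
        mul_le_mul (by linarith) (by linarith) (by linarith) hb'.le
      calc _ ≤ b * b * (2 * (N : ℝ)) := mul_le_mul_of_nonneg_right this (by positivity)
        _ = _ := by ring
    linarith

set_option maxHeartbeats 1000000 in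
/-- An effective lower bound for `L(1, χ)`, from the squares in the Cesàro mean of `1 * χ`. -/
theorem L_one_lower {f : ℕ → ℝ} {q : ℕ} (hq : 0 < q) (hf : IsRealChar f q) {L : ℝ}
    (hL : Tendsto (fun N => ∑ n ∈ Finset.Ioc 0 N, f n * (n : ℝ)⁻¹) atTop (𝓝 L)) :
    1 / (300 * (q : ℝ) ^ 3) ≤ L := by
  have hqr : (1 : ℝ) ≤ q := by exact_mod_cast hq
  -- With cut-off `y` the error terms are about `q * N / y + y ^ 2 / (2 * N)`, and the squares give
  -- about `√N / 2`. For `N = t ^ 6` and `y = t ^ 4` these are about `(q + 1 / 2) * t ^ 2` and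
  -- `t ^ 3 / 2`, and the latter dominates for `t = 4 * q`.
  obtain ⟨t, ht⟩ : ∃ t : ℕ, t = 4 * q := ⟨_, rfl⟩
  have ht0 : 0 < t := by omega
  have htr : (1 : ℝ) ≤ t := by exact_mod_cast ht0
  obtain ⟨N, hN⟩ : ∃ N : ℕ, N = t ^ 6 := ⟨_, rfl⟩
  obtain ⟨y, hy⟩ : ∃ y : ℕ, y = t ^ 4 := ⟨_, rfl⟩
  have hyN : y + 1 ≤ N := by
    have h2 : 4 ≤ t := by omega
    rw [hN, hy]
    calc t ^ 4 + 1 ≤ t ^ 4 + t ^ 4 := by have := Nat.one_le_pow 4 t ht0; omega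
      _ ≤ t ^ 4 * t ^ 2 := by
        have : 2 ≤ t ^ 2 := by nlinarith
        nlinarith [Nat.zero_le (t ^ 4)]
      _ = t ^ 6 := by ring
  have hN0 : (0 : ℝ) < N := by rw [hN]; positivity
  have hy0 : (0 : ℝ) < y := by rw [hy]; positivity
  -- nonnegativity of `1 * χ` allows all terms but the squares to be dropped
  have hlow : ((t : ℝ) ^ 3 - 1) / 2 ≤
      ∑ n ∈ Finset.Ioc 0 N, divSum f n * (1 - (n : ℝ) / N) := by
    have hnn : ∀ n ∈ Finset.Ioc 0 N, 0 ≤ divSum f n * (1 - (n : ℝ) / N) := by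
      intro n hn
      refine mul_nonneg (hf.divSum_nonneg n) ?_
      rw [sub_nonneg, div_le_one hN0]
      exact_mod_cast (Finset.mem_Ioc.1 hn).2
    have hinj : Set.InjOn (fun m : ℕ => m ^ 2) (Finset.Ioc 0 (t ^ 3) : Set ℕ) :=
      fun a _ b _ h => Nat.pow_left_injective (by norm_num) h
    have hsub : (Finset.Ioc 0 (t ^ 3)).image (fun m : ℕ => m ^ 2) ⊆ Finset.Ioc 0 N := by
      intro n hn
      obtain ⟨m, hm, rfl⟩ := Finset.mem_image.1 hn
      obtain ⟨h1, h2⟩ := Finset.mem_Ioc.1 hm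
      refine Finset.mem_Ioc.2 ⟨by positivity, ?_⟩
      calc m ^ 2 ≤ (t ^ 3) ^ 2 := Nat.pow_le_pow_left h2 2
        _ = N := by rw [hN]; ring
    refine le_trans ?_ (Finset.sum_le_sum_of_subset_of_nonneg hsub fun n hn _ => hnn n hn)
    rw [Finset.sum_image hinj]
    have h3 := sum_Ioc_linear (t ^ 3) (1 / (t : ℝ) ^ 3)
    have h4 : ((t ^ 3 : ℕ) : ℝ) - (t ^ 3 : ℕ) * ((t ^ 3 : ℕ) + 1) / 2 * (1 / (t : ℝ) ^ 3) =
        ((t : ℝ) ^ 3 - 1) / 2 := by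
      push_cast
      field_simp
      ring
    rw [← h4, ← h3]
    refine Finset.sum_le_sum fun m hm => ?_
    obtain ⟨hm1, hm2⟩ := Finset.mem_Ioc.1 hm
    have hm2' : (m : ℝ) ≤ (t : ℝ) ^ 3 := by exact_mod_cast hm2
    have h5 : (m : ℝ) / (t : ℝ) ^ 3 ≤ 1 := (div_le_one (by positivity)).2 hm2'
    have h6 : ((m ^ 2 : ℕ) : ℝ) / N = ((m : ℝ) / t ^ 3) ^ 2 := by
      rw [hN]; push_cast; rw [div_pow]; congr 1; ring
    rw [h6]
    have h7 : 0 ≤ (m : ℝ) / t ^ 3 := by positivity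
    have h8 := hf.one_le_divSum_sq hm1
    have h9 : (m : ℝ) * (1 / (t : ℝ) ^ 3) = m / t ^ 3 := by ring
    rw [h9]
    nlinarith [mul_nonneg (sub_nonneg.2 h8) (sub_nonneg.2 (show ((m : ℝ) / t ^ 3) ^ 2 ≤ 1 by
      nlinarith))]
  -- the same mean, evaluated by the hyperbola method
  have hhyp := hyperbola hf (W := fun n => 1 - (n : ℝ) / N) (N := N) (y := y) (by omega)
    (fun n _ hn => by
      rw [sub_nonneg, div_le_one hN0]
      exact_mod_cast hn)
    (fun m n _ hmn _ => by
      have : (m : ℝ) ≤ n := by exact_mod_cast hmn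
      have := div_le_div_of_nonneg_right this hN0.le
      linarith)
  have hFy := (cesaro_inner (Nat.succ_pos y) hyN).2
  have hFy' : ∑ a ∈ Finset.Ioc 0 (N / (y + 1)), (1 - ((a * (y + 1) : ℕ) : ℝ) / N) ≤
      (t : ℝ) ^ 2 / 2 := by
    refine hFy.trans ?_
    have h1 : ((y + 1 : ℕ) : ℝ) / (2 * N) ≤ 1 / 2 := by
      rw [div_le_div_iff₀ (by positivity) (by positivity)]
      have : ((y + 1 : ℕ) : ℝ) ≤ N := by exact_mod_cast hyN
      linarith
    have h2 : (N : ℝ) / ((y + 1 : ℕ) : ℝ) ≤ (t : ℝ) ^ 2 := by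
      rw [div_le_iff₀ (by positivity), hN, hy]
      push_cast
      nlinarith [sq_nonneg (t : ℝ)]
    linarith
  have hmain : ∑ b ∈ Finset.Ioc 0 y, f b * ∑ a ∈ Finset.Ioc 0 (N / b), (1 - ((a * b : ℕ) : ℝ) / N)
      ≤ N / 2 * (L + q / y) + q / 2 + (t : ℝ) ^ 2 / 2 := by
    have hb1 : ∀ b ∈ Finset.Ioc 0 y,
        f b * ∑ a ∈ Finset.Ioc 0 (N / b), (1 - ((a * b : ℕ) : ℝ) / N) ≤
        N / 2 * (f b * (b : ℝ)⁻¹) - 1 / 2 * f b + (y : ℝ) / (2 * N) := by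
      intro b hb
      obtain ⟨h1, h2⟩ := Finset.mem_Ioc.1 hb
      obtain ⟨h3, h4⟩ := cesaro_inner h1 (by omega : b ≤ N)
      set F := ∑ a ∈ Finset.Ioc 0 (N / b), (1 - ((a * b : ℕ) : ℝ) / N)
      have h5 : (b : ℝ) / (2 * N) ≤ (y : ℝ) / (2 * N) := by
        have : (b : ℝ) ≤ y := by exact_mod_cast h2
        exact div_le_div_of_nonneg_right this (by positivity)
      have h6 : (N : ℝ) / b = N * (b : ℝ)⁻¹ := rfl
      rw [h6] at h3 h4
      have h7 : (0 : ℝ) ≤ (y : ℝ) / (2 * N) := by positivity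
      rcases hf.val b with h | h | h <;> rw [h] <;> nlinarith
    refine (Finset.sum_le_sum hb1).trans ?_
    rw [Finset.sum_add_distrib, Finset.sum_sub_distrib, ← Finset.mul_sum, ← Finset.mul_sum,
      Finset.sum_const]
    have h1 := abel_tail (g := fun n => (n : ℝ)⁻¹) (M := y) hf.bound (fun n _ => by positivity)
      (fun n hn => by
        have : (0 : ℝ) < n := by exact_mod_cast (by omega : 0 < n)
        push_cast
        gcongr
        linarith) hL
    have h2 := (abs_le.1 h1).2
    have h3 : (q : ℝ) * ((y + 1 : ℕ) : ℝ)⁻¹ ≤ q / y := by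
      rw [div_eq_mul_inv]
      gcongr
      simp
    have h4 : N / 2 * ∑ n ∈ Finset.Ioc 0 y, f n * (n : ℝ)⁻¹ ≤ N / 2 * (L + q / y) := by
      gcongr
      linarith
    have h5 := (abs_le.1 (hf.bound 0 y)).1
    have h6 : (Finset.Ioc 0 y).card • ((y : ℝ) / (2 * N)) = (t : ℝ) ^ 2 / 2 := by
      rw [Nat.card_Ioc, nsmul_eq_mul, hN, hy]
      push_cast
      field_simp
      simp
    rw [h6]
    linarith
  have h1 := (abs_le.1 hhyp).2
  have h2 : (q : ℝ) * ∑ a ∈ Finset.Ioc 0 (N / (y + 1)), (1 - ((a * (y + 1) : ℕ) : ℝ) / N) ≤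
      q * ((t : ℝ) ^ 2 / 2) := by gcongr
  have h3 : (N : ℝ) / 2 * (L + q / y) = (t : ℝ) ^ 6 / 2 * L + q * (t : ℝ) ^ 2 / 2 := by
    rw [hN, hy]
    push_cast
    field_simp
  rw [h3] at hmain
  have h4 : (t : ℝ) = 4 * q := by rw [ht]; push_cast; rfl
  have h5 : ((t : ℝ) ^ 3 - 1) / 2 ≤ (t : ℝ) ^ 6 / 2 * L + q * (t : ℝ) ^ 2 / 2 + q / 2 +
      (t : ℝ) ^ 2 / 2 + q * ((t : ℝ) ^ 2 / 2) := by linarith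
  rw [h4] at h5
  have hq2 : (q : ℝ) ≤ q ^ 3 := by nlinarith [sq_nonneg ((q : ℝ) - 1)]
  have hq3 : (q : ℝ) ^ 2 ≤ q ^ 3 := by nlinarith [sq_nonneg ((q : ℝ))]
  have h6 : 14 * (q : ℝ) ^ 3 ≤ 4096 * (q : ℝ) ^ 6 * L := by nlinarith
  have h7 : 14 ≤ 4096 * (q : ℝ) ^ 3 * L := by
    have : (q : ℝ) ^ 3 * 14 ≤ (q : ℝ) ^ 3 * (4096 * (q : ℝ) ^ 3 * L) := by nlinarith
    exact le_of_mul_le_mul_left this (by positivity)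
  rw [div_le_iff₀ (by positivity)]
  nlinarith

theorem rpow_neg_sub_succ_le {δ : ℝ} (hδ0 : 0 < δ) (hδ1 : δ ≤ 1) {m : ℕ} (hm : 0 < m) :
    (m : ℝ) ^ (-δ) - ((m + 1 : ℕ) : ℝ) ^ (-δ) ≤ δ * (m : ℝ) ^ (-δ - 1) := by
  have hm' : (0 : ℝ) < m := by exact_mod_cast hm
  have h1 : ((m + 1 : ℕ) : ℝ) = m * (1 + 1 / m) := by
    push_cast
    field_simp
  have h2 : (1 + 1 / (m : ℝ)) ^ δ ≤ 1 + δ * (1 / m) :=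
    rpow_one_add_le_one_add_mul_self
      (by linarith [show (0 : ℝ) < 1 / m by positivity]) hδ0.le hδ1
  have h3 : 1 - δ / m ≤ (1 + 1 / (m : ℝ)) ^ (-δ) := by
    rw [Real.rpow_neg (by positivity)]
    have h4 : 0 < δ / m := by positivity
    have h5 : (1 + δ * (1 / (m : ℝ)))⁻¹ ≤ ((1 + 1 / (m : ℝ)) ^ δ)⁻¹ := by
      gcongr
    refine le_trans ?_ h5
    rw [← one_div, le_div_iff₀ (by positivity)]
    have : δ * (1 / (m : ℝ)) = δ / m := by ring
    rw [this]
    nlinarith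
  rw [h1, Real.mul_rpow hm'.le (by positivity), Real.rpow_sub_one hm'.ne']
  have h6 : 0 < (m : ℝ) ^ (-δ) := by positivity
  have h7 := mul_le_mul_of_nonneg_left h3 h6.le
  calc _ ≤ (m : ℝ) ^ (-δ) - (m : ℝ) ^ (-δ) * (1 - δ / m) := by linarith
    _ = _ := by ring

theorem sum_inv_sq_le (N : ℕ) : ∑ n ∈ Finset.range N, ((n + 1 : ℕ) : ℝ) ^ (-2 : ℝ) ≤ 2 - 1 / N := by
  induction N with
  | zero => simp
  | succ N ih =>
    rw [Finset.sum_range_succ]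
    rcases Nat.eq_zero_or_pos N with h | h
    · subst h
      norm_num
    have hN : (0 : ℝ) < N := by exact_mod_cast h
    have h1 : ((N + 1 : ℕ) : ℝ) ^ (-2 : ℝ) ≤ 1 / N - 1 / ((N + 1 : ℕ) : ℝ) := by
      rw [Real.rpow_neg (by positivity), show ((2 : ℝ)) = ((2 : ℕ) : ℝ) by norm_num,
        Real.rpow_natCast, ← one_div]
      push_cast
      rw [div_sub_div _ _ hN.ne' (by positivity), div_le_div_iff₀ (by positivity) (by positivity)]
      nlinarith
    linarith

/-- A zero at `1 - δ` forces `L(1, χ) ≪ q δ`: write `n⁻¹ = n^{δ-1} n^{-δ}` and sum by parts. The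
partial sums of `∑ χ(n) n^{δ-1}` converge to `0`, so they are `O(q n^{δ-1})`, and `n^{-δ}` has
differences `O(δ n^{-δ-1})`. -/
theorem L_one_upper {f : ℕ → ℝ} {q : ℕ} (hf : IsRealChar f q) {L δ : ℝ}
    (hδ0 : 0 < δ) (hδ1 : δ < 1)
    (hL : Tendsto (fun N => ∑ n ∈ Finset.Ioc 0 N, f n * (n : ℝ)⁻¹) atTop (𝓝 L))
    (h0 : Tendsto (fun N => ∑ n ∈ Finset.Ioc 0 N, f n * (n : ℝ) ^ (-(1 - δ))) atTop (𝓝 0)) :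
    L ≤ 2 * q * δ := by
  set T : ℕ → ℝ := fun b => ∑ n ∈ Finset.Ioc 0 b, f n * (n : ℝ) ^ (-(1 - δ)) with hT
  have hTb : ∀ b, |T b| ≤ q * ((b + 1 : ℕ) : ℝ) ^ (-(1 - δ)) := by
    intro b
    have := abel_tail (g := fun n => (n : ℝ) ^ (-(1 - δ))) (M := b) hf.bound
      (fun n _ => by positivity)
      (fun n hn => by
        have : (0 : ℝ) < n := by exact_mod_cast (by omega : 0 < n)
        exact Real.rpow_le_rpow_of_nonpos this (by push_cast; linarith) (by linarith)) h0
    rwa [sub_zero] at this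
  have hbd : ∀ N : ℕ, ∑ n ∈ Finset.Ioc 0 N, f n * (n : ℝ)⁻¹ ≤
      2 * q * δ + q * ((N + 1 : ℕ) : ℝ)⁻¹ := by
    intro N
    have h1 : ∑ n ∈ Finset.Ioc 0 N, f n * (n : ℝ)⁻¹ =
        ∑ n ∈ Finset.Ioc 0 N, (f n * (n : ℝ) ^ (-(1 - δ))) * (n : ℝ) ^ (-δ) := by
      refine Finset.sum_congr rfl fun n hn => ?_
      have : (0 : ℝ) < n := by exact_mod_cast (Finset.mem_Ioc.1 hn).1
      rw [mul_assoc, ← Real.rpow_add this, ← Real.rpow_neg_one]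
      congr 2
      ring
    rw [h1, abel_identity]
    have hterm : ∀ n ∈ Finset.range N, (∑ k ∈ Finset.Ioc 0 (n + 1), f k * (k : ℝ) ^ (-(1 - δ))) *
        (((n + 1 : ℕ) : ℝ) ^ (-δ) - ((n + 2 : ℕ) : ℝ) ^ (-δ)) ≤
        q * δ * ((n + 1 : ℕ) : ℝ) ^ (-2 : ℝ) := by
      intro n _
      have hn0 : (0 : ℝ) < ((n + 1 : ℕ) : ℝ) := by positivity
      have h2 := rpow_neg_sub_succ_le hδ0 hδ1.le (Nat.succ_pos n)
      have h3 : 0 ≤ ((n + 1 : ℕ) : ℝ) ^ (-δ) - ((n + 2 : ℕ) : ℝ) ^ (-δ) := by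
        rw [sub_nonneg]
        exact Real.rpow_le_rpow_of_nonpos hn0 (by push_cast; linarith) (by linarith)
      have h4 : T (n + 1) ≤ q * ((n + 1 : ℕ) : ℝ) ^ (-(1 - δ)) := by
        refine (le_abs_self _).trans ((hTb _).trans ?_)
        refine mul_le_mul_of_nonneg_left ?_ (Nat.cast_nonneg q)
        exact Real.rpow_le_rpow_of_nonpos hn0 (by push_cast; linarith) (by linarith)
      calc _ ≤ (q * ((n + 1 : ℕ) : ℝ) ^ (-(1 - δ))) * (δ * ((n + 1 : ℕ) : ℝ) ^ (-δ - 1)) :=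
            mul_le_mul h4 h2 h3 (by positivity)
        _ = q * δ * (((n + 1 : ℕ) : ℝ) ^ (-(1 - δ)) * ((n + 1 : ℕ) : ℝ) ^ (-δ - 1)) := by ring
        _ = _ := by
            rw [← Real.rpow_add hn0]
            congr 2
            ring
    refine add_le_add ((Finset.sum_le_sum hterm).trans ?_) ?_
    · rw [← Finset.mul_sum]
      have h5 := sum_inv_sq_le N
      have h6 : (0 : ℝ) ≤ 1 / N := by positivity
      have h7 : (0 : ℝ) ≤ q * δ := by positivity
      nlinarith
    · have hN0 : (0 : ℝ) < ((N + 1 : ℕ) : ℝ) := by positivity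
      calc _ ≤ (q * ((N + 1 : ℕ) : ℝ) ^ (-(1 - δ))) * ((N + 1 : ℕ) : ℝ) ^ (-δ) :=
            mul_le_mul_of_nonneg_right ((le_abs_self _).trans (hTb N)) (by positivity)
        _ = q * ((N + 1 : ℕ) : ℝ)⁻¹ := by
            rw [mul_assoc, ← Real.rpow_add hN0, ← Real.rpow_neg_one]
            congr 2
            ring
  refine le_of_tendsto_of_tendsto' hL ?_ hbd
  have : Tendsto (fun N : ℕ => 2 * q * δ + q * ((N + 1 : ℕ) : ℝ)⁻¹) atTop
      (𝓝 (2 * q * δ + q * 0)) := by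
    refine tendsto_const_nhds.add (Tendsto.const_mul _ ?_)
    exact tendsto_inv_atTop_zero.comp
      (tendsto_natCast_atTop_atTop.comp (tendsto_add_atTop_nat 1))
  simpa using this

/-! ### The weighted mean of `1 * χ` at an exceptional zero -/

/-- The concave function `x ^ δ` lies below its tangent at `y`. -/
theorem rpow_concave {δ : ℝ} (hδ0 : 0 < δ) (hδ1 : δ ≤ 1) {x y : ℝ} (hx : 0 ≤ x) (hy : 0 < y) :
    x ^ δ - y ^ δ ≤ δ * (x - y) * y ^ (δ - 1) := by
  have h1 : x = y * (1 + (x - y) / y) := by field_simp; ring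
  have h0 : -1 ≤ (x - y) / y := by
    rw [le_div_iff₀ hy]; linarith
  have h2 := rpow_one_add_le_one_add_mul_self h0 hδ0.le hδ1
  have h3 : x ^ δ = y ^ δ * (1 + (x - y) / y) ^ δ := by
    rw [← Real.mul_rpow hy.le (by linarith), ← h1]
  have h4 : 0 < y ^ δ := by positivity
  rw [h3, Real.rpow_sub_one hy.ne']
  have h5 := mul_le_mul_of_nonneg_left h2 h4.le
  calc _ ≤ y ^ δ * (1 + δ * ((x - y) / y)) - y ^ δ := by linarith
    _ = _ := by ring

/-- The partial sum `∑_{a ≤ k} a^{δ-1}` minus its main term `k^δ / δ`. -/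
noncomputable def powDiff (δ : ℝ) (k : ℕ) : ℝ :=
  ∑ a ∈ Finset.Ioc 0 k, (a : ℝ) ^ (-(1 - δ)) - (k : ℝ) ^ δ / δ

theorem powDiff_succ {δ : ℝ} (hδ0 : 0 < δ) (hδ1 : δ ≤ 1) {k : ℕ} (hk : 0 < k) :
    powDiff δ (k + 1) ≤ powDiff δ k ∧
      powDiff δ k - (k : ℝ) ^ (-(1 - δ)) ≤
        powDiff δ (k + 1) - ((k + 1 : ℕ) : ℝ) ^ (-(1 - δ)) := by
  have hk' : (0 : ℝ) < k := by exact_mod_cast hk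
  have hk1 : (0 : ℝ) < ((k + 1 : ℕ) : ℝ) := by positivity
  have h1 := rpow_concave hδ0 hδ1 hk1.le hk'
  have h2 := rpow_concave hδ0 hδ1 hk'.le hk1
  have e1 : ((k + 1 : ℕ) : ℝ) - k = 1 := by push_cast; ring
  have e2 : (k : ℝ) - ((k + 1 : ℕ) : ℝ) = -1 := by push_cast; ring
  rw [e1] at h1
  rw [e2] at h2
  have e3 : -(1 - δ) = δ - 1 := by ring
  unfold powDiff
  rw [Finset.sum_Ioc_succ_top (Nat.zero_le k), e3]
  have h3 : ((k + 1 : ℕ) : ℝ) ^ δ / δ - (k : ℝ) ^ δ / δ ≤ (k : ℝ) ^ (δ - 1) := by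
    rw [← sub_div, div_le_iff₀ hδ0]
    linarith
  have h4 : ((k + 1 : ℕ) : ℝ) ^ (δ - 1) ≤ ((k + 1 : ℕ) : ℝ) ^ δ / δ - (k : ℝ) ^ δ / δ := by
    rw [← sub_div, le_div_iff₀ hδ0]
    linarith
  constructor <;> linarith

/-- `powDiff δ` is decreasing, and varies beyond `k` by at most `k^{δ-1}`. -/
theorem powDiff_bounds {δ : ℝ} (hδ0 : 0 < δ) (hδ1 : δ ≤ 1) {k K : ℕ} (hk : 0 < k) (hkK : k ≤ K) :
    powDiff δ K ≤ powDiff δ k ∧ powDiff δ k ≤ powDiff δ K + (k : ℝ) ^ (-(1 - δ)) := by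
  have h : powDiff δ K ≤ powDiff δ k ∧ powDiff δ k - (k : ℝ) ^ (-(1 - δ)) ≤
      powDiff δ K - (K : ℝ) ^ (-(1 - δ)) := by
    induction K, hkK using Nat.le_induction with
    | base => simp
    | succ K hK ih =>
      have := powDiff_succ hδ0 hδ1 (hk.trans_le hK)
      exact ⟨this.1.trans ih.1, ih.2.trans this.2⟩
  have h2 : 0 ≤ (K : ℝ) ^ (-(1 - δ)) := by positivity
  exact ⟨h.1, by linarith [h.2]⟩

theorem powDiff_one (δ : ℝ) : powDiff δ 1 = 1 - 1 / δ := by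
  simp [powDiff]

theorem powDiff_nonpos {δ : ℝ} (hδ0 : 0 < δ) (hδ1 : δ ≤ 1) {k : ℕ} (hk : 0 < k) :
    powDiff δ k ≤ 0 ∧ -(1 / δ) ≤ powDiff δ k := by
  have h := powDiff_bounds hδ0 hδ1 one_pos hk
  rw [powDiff_one] at h
  have : 1 ≤ 1 / δ := by rw [le_div_iff₀ hδ0]; linarith
  constructor
  · linarith
  · have := h.2
    simp at this
    simp
    linarith

/-- With `x = N / b` one has `∑_{a ≤ x} a^{δ-1} = x^δ / δ + c + O(x^{δ-1})`; the constant can be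
taken to be `powDiff δ N`. -/
theorem inner_approx {δ : ℝ} (hδ0 : 0 < δ) (hδ1 : δ ≤ 1) {N b : ℕ} (hb : 0 < b) (hbN : b ≤ N) :
    |∑ a ∈ Finset.Ioc 0 (N / b), (a : ℝ) ^ (-(1 - δ)) - ((N : ℝ) / b) ^ δ / δ - powDiff δ N| ≤
      2 * ((N : ℝ) / b) ^ (-(1 - δ)) := by
  have hb' : (0 : ℝ) < b := by exact_mod_cast hb
  have hk : 0 < N / b := Nat.div_pos hbN hb
  have h := powDiff_bounds hδ0 hδ1 hk (Nat.div_le_self N b)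
  set k := N / b with hkdef
  have hk' : (0 : ℝ) < k := by exact_mod_cast hk
  set x : ℝ := (N : ℝ) / b with hx
  have h1 : (k : ℝ) ≤ x := by
    rw [hx, le_div_iff₀ hb']
    exact_mod_cast Nat.div_mul_le_self N b
  have h2 : x ≤ k + 1 := by
    rw [hx, div_le_iff₀ hb']
    have := Nat.lt_div_mul_add (a := N) hb
    rw [← hkdef] at this
    have : (N : ℝ) < k * b + b := by exact_mod_cast this
    linarith
  have hx0 : 0 < x := hk'.trans_le h1
  have h3 := rpow_concave hδ0 hδ1 hx0.le hk'
  have h4 : x ^ δ / δ - (k : ℝ) ^ δ / δ ≤ (k : ℝ) ^ (-(1 - δ)) := by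
    rw [← sub_div, div_le_iff₀ hδ0, show -(1 - δ) = δ - 1 by ring]
    have h5 : 0 < (k : ℝ) ^ (δ - 1) := by positivity
    have : δ * (x - k) * (k : ℝ) ^ (δ - 1) ≤ δ * 1 * (k : ℝ) ^ (δ - 1) := by
      gcongr
      linarith
    linarith
  have h6 : (k : ℝ) ^ δ / δ ≤ x ^ δ / δ := by gcongr
  have h7 : (k : ℝ) ^ (-(1 - δ)) ≤ 2 * x ^ (-(1 - δ)) := by
    have hk1 : (1 : ℝ) ≤ k := by exact_mod_cast hk
    calc (k : ℝ) ^ (-(1 - δ)) ≤ (x / 2) ^ (-(1 - δ)) :=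
          Real.rpow_le_rpow_of_nonpos (by positivity) (by linarith) (by linarith)
      _ = 2 ^ (1 - δ) * x ^ (-(1 - δ)) := by
          rw [Real.div_rpow hx0.le (by norm_num), Real.rpow_neg (by norm_num : (0 : ℝ) ≤ 2)]
          field_simp
      _ ≤ 2 ^ (1 : ℝ) * x ^ (-(1 - δ)) := by
          gcongr
          · norm_num
          · linarith
      _ = _ := by norm_num
  have h8 : powDiff δ k = ∑ a ∈ Finset.Ioc 0 k, (a : ℝ) ^ (-(1 - δ)) - (k : ℝ) ^ δ / δ := rfl
  rw [abs_le]
  constructor <;> linarith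

/-- If `L(1-δ, χ) = 0`, the sum of `(1 * χ)(n) n^{δ-1}` over `n ≤ y²` has only one main
term: the constant `c` in `inner_approx` is multiplied by a partial sum of `L(1-δ, χ)`, which is
small. -/
theorem sum_divSum_asymp {f : ℕ → ℝ} {q : ℕ} (hq : 0 < q) (hf : IsRealChar f q) {L δ : ℝ}
    (hδ0 : 0 < δ) (hδ1 : δ < 1)
    (hL : Tendsto (fun N => ∑ n ∈ Finset.Ioc 0 N, f n * (n : ℝ)⁻¹) atTop (𝓝 L))
    (h0 : Tendsto (fun N => ∑ n ∈ Finset.Ioc 0 N, f n * (n : ℝ) ^ (-(1 - δ))) atTop (𝓝 0))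
    {y N : ℕ} (hy : 2 ≤ y) (hN : N = y ^ 2) :
    |∑ n ∈ Finset.Ioc 0 N, divSum f n * (n : ℝ) ^ (-(1 - δ)) - L * (N : ℝ) ^ δ / δ| ≤
      5 * q * (N : ℝ) ^ δ / (δ * y) := by
  have hqr : (1 : ℝ) ≤ q := by exact_mod_cast hq
  have hyr : (2 : ℝ) ≤ y := by exact_mod_cast hy
  have hyN : y + 1 ≤ N := by rw [hN]; nlinarith
  have hNr : (N : ℝ) = (y : ℝ) ^ 2 := by rw [hN]; push_cast; rfl
  have hN0 : (0 : ℝ) < N := by rw [hNr]; positivity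
  have hy0 : (0 : ℝ) < y := by linarith
  have hNδ : 0 < (N : ℝ) ^ δ := by positivity
  have hmono : ∀ m n : ℕ, 0 < m → m ≤ n → (n : ℝ) ^ (-(1 - δ)) ≤ (m : ℝ) ^ (-(1 - δ)) := by
    intro m n hm hmn
    exact Real.rpow_le_rpow_of_nonpos (by exact_mod_cast hm) (by exact_mod_cast hmn) (by linarith)
  have hhyp := hyperbola hf (W := fun n => (n : ℝ) ^ (-(1 - δ))) (N := N) (y := y) (by omega)
    (fun n _ hn => by positivity) (fun m n hm hmn _ => hmono m n hm hmn)
  have hinner : ∀ b : ℕ, ∑ a ∈ Finset.Ioc 0 (N / b), ((a * b : ℕ) : ℝ) ^ (-(1 - δ)) =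
      (b : ℝ) ^ (-(1 - δ)) * ∑ a ∈ Finset.Ioc 0 (N / b), (a : ℝ) ^ (-(1 - δ)) := by
    intro b
    rw [Finset.mul_sum]
    refine Finset.sum_congr rfl fun a _ => ?_
    push_cast
    rw [Real.mul_rpow (by positivity) (by positivity), mul_comm]
  simp only [hinner] at hhyp
  -- the terms with `b > y`
  have hE1 : (q : ℝ) * (((y + 1 : ℕ) : ℝ) ^ (-(1 - δ)) *
      ∑ a ∈ Finset.Ioc 0 (N / (y + 1)), (a : ℝ) ^ (-(1 - δ))) ≤ q * (N : ℝ) ^ δ / (δ * y) := by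
    have hk : 0 < N / (y + 1) := Nat.div_pos hyN (Nat.succ_pos y)
    have h1 := (powDiff_nonpos hδ0 hδ1.le hk).1
    unfold powDiff at h1
    have hy1 : (0 : ℝ) < ((y + 1 : ℕ) : ℝ) := by positivity
    have h2 : ((N / (y + 1) : ℕ) : ℝ) ^ δ ≤ ((N : ℝ) / ((y + 1 : ℕ) : ℝ)) ^ δ := by
      gcongr
      exact Nat.cast_div_le
    have h3 : ∑ a ∈ Finset.Ioc 0 (N / (y + 1)), (a : ℝ) ^ (-(1 - δ)) ≤
        ((N : ℝ) / ((y + 1 : ℕ) : ℝ)) ^ δ / δ := by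
      refine le_trans ?_ (div_le_div_of_nonneg_right h2 hδ0.le)
      linarith
    calc _ ≤ (q : ℝ) * (((y + 1 : ℕ) : ℝ) ^ (-(1 - δ)) *
          (((N : ℝ) / ((y + 1 : ℕ) : ℝ)) ^ δ / δ)) := by gcongr
      _ = q * (N : ℝ) ^ δ / (δ * ((y + 1 : ℕ) : ℝ)) := by
          rw [Real.div_rpow hN0.le hy1.le, show -(1 - δ) = δ - 1 by ring,
            Real.rpow_sub_one hy1.ne']
          field_simp
      _ ≤ _ := by
          gcongr
          simp
  -- the terms with `b ≤ y`
  set c := powDiff δ N with hc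
  have hcb := powDiff_nonpos hδ0 hδ1.le (by omega : 0 < N)
  have hE2 : |∑ b ∈ Finset.Ioc 0 y, f b * ((b : ℝ) ^ (-(1 - δ)) *
      ∑ a ∈ Finset.Ioc 0 (N / b), (a : ℝ) ^ (-(1 - δ))) -
      ((N : ℝ) ^ δ / δ * ∑ b ∈ Finset.Ioc 0 y, f b * (b : ℝ)⁻¹ +
        c * ∑ b ∈ Finset.Ioc 0 y, f b * (b : ℝ) ^ (-(1 - δ)))| ≤ 2 * (N : ℝ) ^ δ / y := by
    rw [Finset.mul_sum, Finset.mul_sum, ← Finset.sum_add_distrib, ← Finset.sum_sub_distrib]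
    refine (Finset.abs_sum_le_sum_abs _ _).trans ?_
    have hterm : ∀ b ∈ Finset.Ioc 0 y, |f b * ((b : ℝ) ^ (-(1 - δ)) *
        ∑ a ∈ Finset.Ioc 0 (N / b), (a : ℝ) ^ (-(1 - δ))) -
        ((N : ℝ) ^ δ / δ * (f b * (b : ℝ)⁻¹) + c * (f b * (b : ℝ) ^ (-(1 - δ))))| ≤
        2 * (N : ℝ) ^ δ / N := by
      intro b hb
      obtain ⟨hb1, hb2⟩ := Finset.mem_Ioc.1 hb
      have hb' : (0 : ℝ) < b := by exact_mod_cast hb1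
      have h1 := inner_approx hδ0 hδ1.le hb1 (by omega : b ≤ N)
      have h2 : f b * ((b : ℝ) ^ (-(1 - δ)) *
        ∑ a ∈ Finset.Ioc 0 (N / b), (a : ℝ) ^ (-(1 - δ))) -
        ((N : ℝ) ^ δ / δ * (f b * (b : ℝ)⁻¹) + c * (f b * (b : ℝ) ^ (-(1 - δ)))) =
        f b * (b : ℝ) ^ (-(1 - δ)) * (∑ a ∈ Finset.Ioc 0 (N / b), (a : ℝ) ^ (-(1 - δ)) -
          ((N : ℝ) / b) ^ δ / δ - powDiff δ N) := by
        rw [Real.div_rpow hN0.le hb'.le, show -(1 - δ) = δ - 1 by ring,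
            Real.rpow_sub_one hb'.ne']
        field_simp
        ring
      have hfb : |f b| ≤ 1 := by
        rcases hf.val b with h | h | h <;> rw [h] <;> simp
      rw [h2, abs_mul, abs_mul, abs_of_nonneg (by positivity : 0 ≤ (b : ℝ) ^ (-(1 - δ)))]
      calc _ ≤ 1 * (b : ℝ) ^ (-(1 - δ)) * (2 * ((N : ℝ) / b) ^ (-(1 - δ))) := by gcongr
        _ = 2 * (N : ℝ) ^ δ / N := by
          rw [Real.div_rpow hN0.le hb'.le, show -(1 - δ) = δ - 1 by ring,
            Real.rpow_sub_one hN0.ne']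
          field_simp
    refine (Finset.sum_le_sum hterm).trans ?_
    rw [Finset.sum_const, Nat.card_Ioc, nsmul_eq_mul, Nat.sub_zero]
    have : (y : ℝ) * (2 * (N : ℝ) ^ δ / N) = 2 * (N : ℝ) ^ δ / y := by
      rw [mul_div_assoc, mul_div_assoc]
      nth_rewrite 2 [hNr]
      field_simp
    rw [this]
  -- the tails of the two series
  have hT1 := abel_tail (g := fun n => (n : ℝ)⁻¹) (M := y) hf.bound (fun n _ => by positivity)
    (fun n hn => by
      have : (0 : ℝ) < n := by exact_mod_cast (by omega : 0 < n)
      push_cast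
      gcongr
      linarith) hL
  have hT2 := abel_tail (g := fun n => (n : ℝ) ^ (-(1 - δ))) (M := y) hf.bound
    (fun n _ => by positivity) (fun n hn => hmono _ _ (by omega) (Nat.le_succ n)) h0
  rw [sub_zero] at hT2
  have hy1 : (0 : ℝ) < ((y + 1 : ℕ) : ℝ) := by positivity
  have hT1' : (q : ℝ) * ((y + 1 : ℕ) : ℝ)⁻¹ ≤ q / y := by
    rw [div_eq_mul_inv]
    gcongr
    simp
  have hT2' : (q : ℝ) * ((y + 1 : ℕ) : ℝ) ^ (-(1 - δ)) ≤ q * (N : ℝ) ^ δ / y := by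
    rw [show -(1 - δ) = δ - 1 by ring, Real.rpow_sub_one hy1.ne', mul_div_assoc]
    gcongr
    simp
  set S := ∑ n ∈ Finset.Ioc 0 N, divSum f n * (n : ℝ) ^ (-(1 - δ))
  set A := ∑ b ∈ Finset.Ioc 0 y, f b * ((b : ℝ) ^ (-(1 - δ)) *
      ∑ a ∈ Finset.Ioc 0 (N / b), (a : ℝ) ^ (-(1 - δ)))
  set B := ∑ b ∈ Finset.Ioc 0 y, f b * (b : ℝ)⁻¹
  set D := ∑ b ∈ Finset.Ioc 0 y, f b * (b : ℝ) ^ (-(1 - δ))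
  have e1 : |S - A| ≤ q * (N : ℝ) ^ δ / (δ * y) := hhyp.trans hE1
  have e2 : |(N : ℝ) ^ δ / δ * (B - L)| ≤ q * (N : ℝ) ^ δ / (δ * y) := by
    rw [abs_mul, abs_of_pos (by positivity)]
    calc _ ≤ (N : ℝ) ^ δ / δ * (q / y) := by gcongr; exact hT1.trans hT1'
      _ = _ := by field_simp
  have e3 : |c * D| ≤ q * (N : ℝ) ^ δ / (δ * y) := by
    rw [abs_mul]
    have : |c| ≤ 1 / δ := abs_le.2 ⟨hcb.2, hcb.1.trans (by positivity)⟩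
    calc _ ≤ 1 / δ * (q * (N : ℝ) ^ δ / y) := by gcongr; exact hT2.trans hT2'
      _ = _ := by field_simp
  have e4 : 2 * (N : ℝ) ^ δ / y ≤ 2 * (q * (N : ℝ) ^ δ / (δ * y)) := by
    rw [← mul_div_assoc, div_le_div_iff₀ hy0 (by positivity)]
    have : δ ≤ q := hδ1.le.trans hqr
    have h9 : 0 ≤ (N : ℝ) ^ δ * y := by positivity
    nlinarith [mul_nonneg (sub_nonneg.2 this) h9]
  have e5 : S - L * (N : ℝ) ^ δ / δ = (S - A) + (A - ((N : ℝ) ^ δ / δ * B + c * D)) +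
      (N : ℝ) ^ δ / δ * (B - L) + c * D := by ring
  have e6 : 5 * q * (N : ℝ) ^ δ / (δ * y) = 5 * (q * (N : ℝ) ^ δ / (δ * y)) := by ring
  rw [e5, e6]
  rw [abs_le] at *
  constructor <;> linarith [e1.1, e1.2, e2.1, e2.2, e3.1, e3.2, hE2.1, hE2.2]

/-! ### Scarcity of primes with `χ(p) = 1` -/

/-- The products `p * m` with `m ≤ z < p ≤ x` and `p` prime are pairwise distinct and `p`, `m` are
coprime, so multiplicativity and nonnegativity of `1 * χ` bound the product of the two sums. -/
theorem primeSum_mul_le {f : ℕ → ℝ} {q : ℕ} (hf : IsRealChar f q) (s : ℝ) (z x : ℕ) :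
    (∑ p ∈ (Finset.Ioc z x).filter Nat.Prime, divSum f p * (p : ℝ) ^ s) *
      ∑ m ∈ Finset.Ioc 0 z, divSum f m * (m : ℝ) ^ s ≤
    ∑ n ∈ Finset.Ioc z (z * x), divSum f n * (n : ℝ) ^ s := by
  classical
  rw [Finset.sum_mul_sum, ← Finset.sum_product']
  set D := ((Finset.Ioc z x).filter Nat.Prime) ×ˢ Finset.Ioc 0 z with hD
  have hmem : ∀ a ∈ D, (z < a.1 ∧ a.1 ≤ x ∧ a.1.Prime) ∧ 0 < a.2 ∧ a.2 ≤ z := by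
    intro a ha
    simpa [hD, and_assoc] using ha
  have hinj : Set.InjOn (fun a : ℕ × ℕ => a.1 * a.2) D := by
    rintro ⟨p, m⟩ hpm ⟨p', m'⟩ hpm' h
    obtain ⟨⟨h1, h2, h3⟩, h4, h5⟩ := hmem _ hpm
    obtain ⟨⟨h1', h2', h3'⟩, h4', h5'⟩ := hmem _ hpm'
    simp only at h h1 h2 h3 h4 h5 h1' h2' h3' h4' h5'
    have hd : p ∣ p' * m' := ⟨m, h.symm⟩
    have : p = p' := by
      rcases h3.dvd_mul.1 hd with h | h
      · exact (Nat.prime_dvd_prime_iff_eq h3 h3').1 h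
      · have := Nat.le_of_dvd h4' h
        omega
    subst this
    have := Nat.eq_of_mul_eq_mul_left h3.pos h
    simp [this]
  have heq : ∑ a ∈ D, divSum f a.1 * (a.1 : ℝ) ^ s * (divSum f a.2 * (a.2 : ℝ) ^ s) =
      ∑ n ∈ D.image (fun a : ℕ × ℕ => a.1 * a.2), divSum f n * (n : ℝ) ^ s := by
    rw [Finset.sum_image hinj]
    refine Finset.sum_congr rfl fun a ha => ?_
    obtain ⟨⟨h1, h2, h3⟩, h4, h5⟩ := hmem _ ha
    have hc : a.1.Coprime a.2 :=
      (Nat.Prime.coprime_iff_not_dvd h3).2 fun h => by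
        have := Nat.le_of_dvd h4 h
        omega
    rw [hf.divSum_mul hc, Nat.cast_mul, Real.mul_rpow (by positivity) (by positivity)]
    ring
  rw [heq]
  refine Finset.sum_le_sum_of_subset_of_nonneg ?_ fun n _ _ =>
    mul_nonneg (hf.divSum_nonneg n) (by positivity)
  intro n hn
  obtain ⟨a, ha, rfl⟩ := Finset.mem_image.1 hn
  obtain ⟨⟨h1, h2, h3⟩, h4, h5⟩ := hmem _ ha
  rw [Finset.mem_Ioc]
  constructor
  · nlinarith
  · rw [mul_comm z]
    exact Nat.mul_le_mul h2 h5

/-- An effective bound on how close to `1` a real zero can be. -/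
theorem delta_lower {f : ℕ → ℝ} {q : ℕ} (hq : 0 < q) (hf : IsRealChar f q) {L δ : ℝ}
    (hδ0 : 0 < δ) (hδ1 : δ < 1)
    (hL : Tendsto (fun N => ∑ n ∈ Finset.Ioc 0 N, f n * (n : ℝ)⁻¹) atTop (𝓝 L))
    (h0 : Tendsto (fun N => ∑ n ∈ Finset.Ioc 0 N, f n * (n : ℝ) ^ (-(1 - δ))) atTop (𝓝 0)) :
    1 / (600 * (q : ℝ) ^ 4) ≤ δ := by
  have h1 := L_one_lower hq hf hL
  have h2 := L_one_upper hf hδ0 hδ1 hL h0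
  have hqr : (1 : ℝ) ≤ q := by exact_mod_cast hq
  have h3 : 1 / (300 * (q : ℝ) ^ 3) ≤ 2 * q * δ := h1.trans h2
  rw [div_le_iff₀ (by positivity)] at h3 ⊢
  nlinarith

/-- Primes `p` with `f p = 1` are scarce in `(q ^ 40, q ^ 80]`. By `sum_divSum_asymp` the sum of
`divSum f n * n^{δ-1}` over `(q ^ 40, q ^ 120]` is only `O(δ log q)` times the sum over
`(0, q ^ 40]`, whereas by `primeSum_mul_le` it is at least the latter times the sum of
`divSum f p * p^{δ-1}` over the primes in `(q ^ 40, q ^ 80]`. -/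
theorem primeSum_le {f : ℕ → ℝ} {q : ℕ} (hq : 10000 ≤ q) (hf : IsRealChar f q) {L δ : ℝ}
    (hδ0 : 0 < δ) (hδ1 : δ < 1)
    (hL : Tendsto (fun N => ∑ n ∈ Finset.Ioc 0 N, f n * (n : ℝ)⁻¹) atTop (𝓝 L))
    (h0 : Tendsto (fun N => ∑ n ∈ Finset.Ioc 0 N, f n * (n : ℝ) ^ (-(1 - δ))) atTop (𝓝 0))
    (hsmall : 120 * δ * Real.log q ≤ 1) :
    ∑ p ∈ (Finset.Ioc (q ^ 40) (q ^ 80)).filter (fun p => p.Prime ∧ f p = 1), (p : ℝ)⁻¹ ≤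
      200 * δ * Real.log q := by
  have hq0 : 0 < q := by omega
  have hqr : (10000 : ℝ) ≤ q := by exact_mod_cast hq
  have hδl := delta_lower hq0 hf hδ0 hδ1 hL h0
  have hLl := L_one_lower hq0 hf hL
  have hL0 : 0 < L := lt_of_lt_of_le (by positivity) hLl
  have hlog : 1 ≤ Real.log q := by
    rw [Real.le_log_iff_exp_le (by linarith)]
    linarith [Real.exp_one_lt_d9]
  have hA := sum_divSum_asymp hq0 hf hδ0 hδ1 hL h0 (y := q ^ 20) (N := q ^ 40)
    (le_trans (by norm_num; omega : 2 ≤ q ^ 1) (Nat.pow_le_pow_right hq0 (by norm_num)))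
    (by ring)
  have hB := sum_divSum_asymp hq0 hf hδ0 hδ1 hL h0 (y := q ^ 60) (N := q ^ 120)
    (le_trans (by norm_num; omega : 2 ≤ q ^ 1) (Nat.pow_le_pow_right hq0 (by norm_num)))
    (by ring)
  have hM := primeSum_mul_le hf (-(1 - δ)) (q ^ 40) (q ^ 80)
  rw [show q ^ 40 * q ^ 80 = q ^ 120 by ring] at hM
  have hsplit := Finset.sum_Ioc_consecutive (fun n : ℕ => divSum f n * (n : ℝ) ^ (-(1 - δ)))
    (Nat.zero_le (q ^ 40)) (Nat.pow_le_pow_right hq0 (by norm_num : 40 ≤ 120))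
  set S1 := ∑ n ∈ Finset.Ioc 0 (q ^ 40), divSum f n * (n : ℝ) ^ (-(1 - δ)) with hS1
  set S2 := ∑ n ∈ Finset.Ioc 0 (q ^ 120), divSum f n * (n : ℝ) ^ (-(1 - δ)) with hS2
  set R := ∑ p ∈ (Finset.Ioc (q ^ 40) (q ^ 80)).filter Nat.Prime,
    divSum f p * (p : ℝ) ^ (-(1 - δ)) with hR
  have hR0 : 0 ≤ R := Finset.sum_nonneg fun n _ => mul_nonneg (hf.divSum_nonneg n) (by positivity)
  -- the primes with `f p = 1` each contribute at least `2 / p` to `R`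
  have hRl : 2 * ∑ p ∈ (Finset.Ioc (q ^ 40) (q ^ 80)).filter (fun p => p.Prime ∧ f p = 1),
      (p : ℝ)⁻¹ ≤ R := by
    rw [Finset.mul_sum]
    refine le_trans (Finset.sum_le_sum (g := fun p : ℕ => divSum f p * (p : ℝ) ^ (-(1 - δ))) ?_)
      (Finset.sum_le_sum_of_subset_of_nonneg ?_ fun n _ _ =>
        mul_nonneg (hf.divSum_nonneg n) (by positivity))
    · intro p hp
      obtain ⟨_, hp, hfp⟩ := Finset.mem_filter.1 hp
      rw [hf.divSum_prime hp, hfp, ← Real.rpow_neg_one]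
      have : (p : ℝ) ^ (-1 : ℝ) ≤ (p : ℝ) ^ (-(1 - δ)) :=
        Real.rpow_le_rpow_of_exponent_le (by exact_mod_cast hp.one_lt.le) (by linarith)
      linarith
    · intro p hp
      simp only [Finset.mem_filter] at hp ⊢
      tauto
  set Z : ℝ := ((q ^ 40 : ℕ) : ℝ) ^ δ with hZ
  set E : ℝ := Real.exp (80 * δ * Real.log q) with hE
  have hZ0 : 0 < Z := by positivity
  have hW : ((q ^ 120 : ℕ) : ℝ) ^ δ = Z * E := by
    have hqp : (0 : ℝ) < q := by linarith
    rw [hZ, hE, Nat.cast_pow, Nat.cast_pow, ← Real.rpow_natCast, ← Real.rpow_natCast,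
      ← Real.rpow_mul hqp.le, ← Real.rpow_mul hqp.le, Real.rpow_def_of_pos hqp,
      Real.rpow_def_of_pos hqp, ← Real.exp_add]
    congr 1
    push_cast
    ring
  rw [hW] at hB
  have hE1 : E - 1 ≤ 160 * δ * Real.log q := by
    have := Real.abs_exp_sub_one_le (x := 80 * δ * Real.log q)
      (by rw [abs_of_nonneg (by positivity)]; linarith [show 0 ≤ δ * Real.log q by positivity])
    rw [abs_of_nonneg (show 0 ≤ 80 * δ * Real.log q by positivity)] at this
    linarith [le_abs_self (E - 1)]
  have hE3 : E ≤ 3 := by linarith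
  -- the error terms are negligible because `δ` and `L` are at least powers of `1 / q`
  have hq4 : (q : ℝ) ^ 4 * 600 * δ ≥ 1 := by
    rw [div_le_iff₀ (by positivity)] at hδl; linarith
  have hq3 : (q : ℝ) ^ 3 * 300 * L ≥ 1 := by
    rw [div_le_iff₀ (by positivity)] at hLl; linarith
  have herr : 5 * q * Z / (δ * (q ^ 20 : ℕ)) ≤ Z * L / 10 := by
    rw [div_le_iff₀ (by positivity)]
    push_cast
    have h1 : (1 : ℝ) ≤ (q : ℝ) ^ 7 * (180000 * (δ * L)) := by
      have := mul_le_mul hq4 hq3 zero_le_one (by positivity)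
      nlinarith
    have h2 : (50 : ℝ) * 180000 ≤ (q : ℝ) ^ 12 := by
      calc (50 : ℝ) * 180000 ≤ 10000 ^ 12 := by norm_num
        _ ≤ _ := by gcongr
    have h3 : 50 * (q : ℝ) ≤ L * δ * (q : ℝ) ^ 20 := by
      have e : L * δ * (q : ℝ) ^ 20 =
          (q : ℝ) ^ 7 * (180000 * (δ * L)) * q * ((q : ℝ) ^ 12 / 180000) := by
        ring
      rw [e]
      have h4 : (50 : ℝ) ≤ (q : ℝ) ^ 12 / 180000 := by
        rw [le_div_iff₀ (by norm_num)]; exact h2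
      have h5 : (q : ℝ) ≤ (q : ℝ) ^ 7 * (180000 * (δ * L)) * q := by nlinarith
      nlinarith
    nlinarith
  have herr2 : 5 * q * (Z * E) / (δ * (q ^ 60 : ℕ)) ≤ 3 * Z * L / 10 := by
    have h1 : 5 * q * (Z * E) / (δ * (q ^ 60 : ℕ)) ≤ 5 * q * (Z * 3) / (δ * (q ^ 20 : ℕ)) := by
      gcongr
      · omega
    calc _ ≤ _ := h1
      _ = 3 * (5 * q * Z / (δ * (q ^ 20 : ℕ))) := by ring
      _ ≤ _ := by linarith
  have hA' := abs_le.1 hA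
  have hB' := abs_le.1 hB
  have hS1l : Z * L / (2 * δ) ≤ S1 := by
    have e1 : L * Z / δ = Z * L / (2 * δ) + Z * L / (2 * δ) := by field_simp; ring
    have e2 : Z * L / 2 ≤ Z * L / (2 * δ) := by
      gcongr; linarith
    have : 0 < Z * L := by positivity
    linarith [hA'.1]
  have hdiff : S2 - S1 ≤ Z * L * (200 * Real.log q) := by
    have e1 : L * (Z * E) / δ - L * Z / δ = Z * L * ((E - 1) / δ) := by ring
    have e2 : (E - 1) / δ ≤ 160 * Real.log q := by
      rw [div_le_iff₀ hδ0]; linarith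
    have e3 : Z * L * ((E - 1) / δ) ≤ Z * L * (160 * Real.log q) := by gcongr
    have e4 : Z * L ≤ Z * L * Real.log q := le_mul_of_one_le_right (by positivity) hlog
    linarith [hA'.1, hB'.2]
  have hfin : R * (Z * L / (2 * δ)) ≤ Z * L * (200 * Real.log q) :=
    (mul_le_mul_of_nonneg_left hS1l hR0).trans (by linarith)
  have : R ≤ 400 * δ * Real.log q := by
    have e : R * (Z * L / (2 * δ)) = (Z * L) * (R / (2 * δ)) := by ring
    rw [e] at hfin
    have := le_of_mul_le_mul_left hfin (by positivity)
    rw [div_le_iff₀ (by positivity)] at this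
    linarith
  linarith

/-! ### A dyadic scale with few such primes -/

/-- Pigeonhole over about `40 log q` dyadic blocks `(2 ^ j * q ^ 40, 2 ^ (j + 1) * q ^ 40]`: one of them
has at most the average share of `∑ 1 / p`. -/
theorem exists_dyadic_scale {q : ℕ} (hq : 10000 ≤ q) (P : ℕ → Prop) [DecidablePred P] {δ : ℝ}
    (hδ0 : 0 < δ)
    (hP : ∑ p ∈ (Finset.Ioc (q ^ 40) (q ^ 80)).filter P, (p : ℝ)⁻¹ ≤ 200 * δ * Real.log q) :
    ∃ Y : ℕ, q ^ 39 ≤ Y ∧ 2 * (q * Y) ≤ q ^ 80 ∧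
      (((Finset.Ioc (q * Y) (2 * (q * Y))).filter P).card : ℝ) ≤ 12 * δ * (q * Y : ℕ) := by
  have hq0 : 0 < q := by omega
  have hqr : (10000 : ℝ) ≤ q := by exact_mod_cast hq
  have hlog : 1 ≤ Real.log q := by
    rw [Real.le_log_iff_exp_le (by linarith)]
    linarith [Real.exp_one_lt_d9]
  obtain ⟨J, hJ⟩ : ∃ J : ℕ, J = ⌊40 * Real.log q⌋₊ := ⟨_, rfl⟩
  have hJ1 : (J : ℝ) ≤ 40 * Real.log q := by rw [hJ]; exact Nat.floor_le (by positivity)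
  have hJ2 : 39 * Real.log q ≤ J := by
    have := Nat.lt_floor_add_one (40 * Real.log q)
    rw [← hJ] at this
    linarith
  have hJq : 2 ^ J ≤ q ^ 40 := by
    have : (2 : ℝ) ^ J ≤ (q : ℝ) ^ 40 := by
      rw [← Real.log_le_log_iff (by positivity) (by positivity), Real.log_pow, Real.log_pow]
      push_cast
      have := Real.log_two_lt_d9
      nlinarith
    exact_mod_cast this
  set A : ℕ → Finset ℕ := fun j => (Finset.Ioc (2 ^ j * q ^ 40) (2 ^ (j + 1) * q ^ 40)).filter P
    with hA
  have hdisj : ∀ n : ℕ, ∑ j ∈ Finset.range n, ∑ p ∈ A j, (p : ℝ)⁻¹ =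
      ∑ p ∈ (Finset.Ioc (q ^ 40) (2 ^ n * q ^ 40)).filter P, (p : ℝ)⁻¹ := by
    intro n
    induction n with
    | zero => simp
    | succ n ih =>
      rw [Finset.sum_range_succ, ih, hA]
      simp only [Finset.sum_filter]
      refine Finset.sum_Ioc_consecutive (fun p : ℕ => if P p then (p : ℝ)⁻¹ else 0) ?_ ?_
      · exact Nat.le_mul_of_pos_left _ (by positivity)
      · gcongr
        · norm_num
        · omega
  have htot : ∑ j ∈ Finset.range J, ∑ p ∈ A j, (p : ℝ)⁻¹ ≤ ∑ j ∈ Finset.range J, 6 * δ := by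
    rw [hdisj, Finset.sum_const, Finset.card_range, nsmul_eq_mul]
    calc _ ≤ ∑ p ∈ (Finset.Ioc (q ^ 40) (q ^ 80)).filter P, (p : ℝ)⁻¹ := by
          refine Finset.sum_le_sum_of_subset_of_nonneg ?_ fun _ _ _ => by positivity
          refine Finset.filter_subset_filter _ (Finset.Ioc_subset_Ioc_right ?_)
          calc 2 ^ J * q ^ 40 ≤ q ^ 40 * q ^ 40 := by gcongr
            _ = q ^ 80 := by ring
      _ ≤ 200 * δ * Real.log q := hP
      _ ≤ J * (6 * δ) := by nlinarith
  have hJ0 : (Finset.range J).Nonempty := by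
    rw [Finset.nonempty_range_iff]
    rintro rfl
    norm_num at hJ2
    linarith
  obtain ⟨j, hj, hjs⟩ := Finset.exists_le_of_sum_le hJ0 htot
  rw [Finset.mem_range] at hj
  have e : q * (2 ^ j * q ^ 39) = 2 ^ j * q ^ 40 := by ring
  refine ⟨2 ^ j * q ^ 39, Nat.le_mul_of_pos_left _ (by positivity), ?_, ?_⟩
  · rw [e]
    calc 2 * (2 ^ j * q ^ 40) = 2 ^ (j + 1) * q ^ 40 := by ring
      _ ≤ 2 ^ J * q ^ 40 := by
        gcongr
        · norm_num
        · omega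
      _ ≤ q ^ 40 * q ^ 40 := by gcongr
      _ = q ^ 80 := by ring
  · rw [e, show 2 * (2 ^ j * q ^ 40) = 2 ^ (j + 1) * q ^ 40 by ring]
    change ((A j).card : ℝ) ≤ _
    have hX : (0 : ℝ) < ((2 ^ (j + 1) * q ^ 40 : ℕ) : ℝ) := by
      exact_mod_cast Nat.mul_pos (by positivity) (by positivity)
    have h1 : ∑ p ∈ A j, ((2 ^ (j + 1) * q ^ 40 : ℕ) : ℝ)⁻¹ ≤ 6 * δ := by
      refine le_trans (Finset.sum_le_sum fun p hp => ?_) hjs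
      have hp' := Finset.mem_Ioc.1 (Finset.mem_filter.1 hp).1
      have : (0 : ℝ) < p := by exact_mod_cast lt_of_le_of_lt (Nat.zero_le _) hp'.1
      gcongr
      exact hp'.2
    rw [Finset.sum_const, nsmul_eq_mul, ← div_eq_mul_inv, div_le_iff₀ hX] at h1
    refine h1.trans (le_of_eq ?_)
    push_cast
    ring

/-! ### A residue class with few primes -/

section

variable {q : ℕ} [NeZero q] {χ : DirichletCharacter ℂ q}

/-- A nontrivial real character takes the value `1` on exactly half of the reduced classes. -/
theorem two_mul_card_eq_one (hχ : χ ≠ 1) (hreal : ∀ a : ZMod q, (χ a).im = 0) :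
    2 * ((Finset.range q).filter (fun b => realChar χ b = 1)).card = q.totient := by
  have hf := isRealChar_realChar hχ hreal
  have h0 : ∑ n ∈ Finset.range q, realChar χ n = 0 := by
    have h1 : ∑ n ∈ Finset.range q, χ (n : ZMod q) = 0 := by
      rw [← MulChar.sum_eq_zero_of_ne_one hχ]
      refine Finset.sum_nbij (fun n => (n : ZMod q)) (by simp) ?_ ?_ (by simp)
      · intro a ha b hb hab
        simp only [Finset.coe_range, Set.mem_Iio] at ha hb
        have := (ZMod.natCast_eq_natCast_iff' a b q).1 hab
        rwa [Nat.mod_eq_of_lt ha, Nat.mod_eq_of_lt hb] at this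
      · intro a _
        exact ⟨a.val, by simpa using ZMod.val_lt a, by simp⟩
    have := congrArg Complex.re h1
    rw [Complex.re_sum] at this
    simpa [realChar] using this
  have htot : (q.totient : ℝ) = ∑ n ∈ Finset.range q, (if q.Coprime n then (1 : ℝ) else 0) := by
    rw [Nat.totient_eq_card_coprime]
    simp
  have hz : ∀ n : ℕ, realChar χ n ≠ 0 ↔ q.Coprime n := by
    intro n
    rw [← Complex.ofReal_ne_zero, ofReal_realChar hreal, Nat.coprime_comm,
      ← ZMod.isUnit_iff_coprime]
    constructor
    · intro h
      by_contra hn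
      exact h (χ.map_nonunit hn)
    · intro h
      exact (h.map χ).ne_zero
  have hpt : ∀ n ∈ Finset.range q, 2 * (if realChar χ n = 1 then (1 : ℝ) else 0) =
      (if q.Coprime n then (1 : ℝ) else 0) + realChar χ n := by
    intro n _
    have hzn := hz n
    rcases hf.val n with h | h | h
    · rw [if_neg (by rw [h]; norm_num), if_neg (fun hc => hzn.2 hc h), h]; norm_num
    · rw [if_pos h, if_pos (hzn.1 (by rw [h]; norm_num)), h]; norm_num
    · rw [if_neg (by rw [h]; norm_num), if_pos (hzn.1 (by rw [h]; norm_num)), h]; norm_num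
  have : (2 * ((Finset.range q).filter (fun b => realChar χ b = 1)).card : ℝ) = q.totient := by
    have h2 := Finset.sum_congr rfl hpt
    rw [← Finset.mul_sum, Finset.sum_add_distrib, h0, ← htot, add_zero] at h2
    rw [← h2]
    simp
  exact_mod_cast this

/-- Among the `φ(q) / 2` reduced classes with `χ(b) = 1`, one contains at most the average number of
primes from `(q * Y, 2 * q * Y]`. -/
theorem exists_good_class (hq : 2 ≤ q) (hχ : χ ≠ 1) (hreal : ∀ a : ZMod q, (χ a).im = 0) (Y : ℕ) :
    ∃ b : ℕ, 0 < b ∧ b < q ∧ b.Coprime q ∧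
      ((Finset.Ico Y (2 * Y)).filter (fun k => (q * k + b).Prime)).card * q.totient ≤
      2 * ((Finset.Ioc (q * Y) (2 * (q * Y))).filter
        (fun p => p.Prime ∧ realChar χ p = 1)).card := by
  classical
  set B := (Finset.range q).filter (fun b => realChar χ b = 1) with hB
  set P := (Finset.Ioc (q * Y) (2 * (q * Y))).filter (fun p => p.Prime ∧ realChar χ p = 1) with hP
  have hcard : 2 * B.card = q.totient := two_mul_card_eq_one hχ hreal
  have hφ : 0 < q.totient := Nat.totient_pos.2 (by omega)
  have hmod : ∀ n : ℕ, realChar χ (n % q) = realChar χ n := by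
    intro n
    unfold realChar
    rw [ZMod.natCast_mod]
  have hfib : P.card = ∑ b ∈ B, (P.filter (fun p => p % q = b)).card := by
    refine Finset.card_eq_sum_card_fiberwise fun p hp => ?_
    have hp' := (Finset.mem_filter.1 hp).2.2
    simp only [hB, Finset.coe_filter, Finset.mem_range, Set.mem_ofPred_eq]
    exact ⟨Nat.mod_lt _ (by omega), by rw [hmod, hp']⟩
  have hBne : B.Nonempty := by
    rw [← Finset.card_pos]; omega
  obtain ⟨b, hb, hmin⟩ := Finset.exists_min_image B
    (fun b => (P.filter (fun p => p % q = b)).card) hBne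
  obtain ⟨hbq, hb1⟩ := Finset.mem_filter.1 hb
  rw [Finset.mem_range] at hbq
  have hunit : b.Coprime q := by
    rw [← ZMod.isUnit_iff_coprime]
    by_contra hn
    have : realChar χ b = 0 := by unfold realChar; rw [χ.map_nonunit hn]; simp
    rw [this] at hb1
    norm_num at hb1
  have hb0 : 0 < b := by
    rcases Nat.eq_zero_or_pos b with h | h
    · subst h
      rw [Nat.coprime_zero_left] at hunit
      omega
    · exact h
  refine ⟨b, hb0, hbq, hunit, ?_⟩
  have h1 : B.card * (P.filter (fun p => p % q = b)).card ≤ P.card := by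
    rw [hfib, ← smul_eq_mul]
    exact Finset.card_nsmul_le_sum _ _ _ hmin
  have h2 : ((Finset.Ico Y (2 * Y)).filter (fun k => (q * k + b).Prime)).card ≤
      (P.filter (fun p => p % q = b)).card := by
    refine Finset.card_le_card_of_injOn (fun k => q * k + b) ?_ ?_
    · intro k hk
      simp only [Finset.coe_filter, Finset.mem_Ico, Set.mem_ofPred_eq] at hk
      have hmodk : (q * k + b) % q = b := by
        rw [Nat.mul_add_mod, Nat.mod_eq_of_lt hbq]
      simp only [hP, Finset.coe_filter, Finset.mem_filter, Finset.mem_Ioc, Set.mem_ofPred_eq]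
      refine ⟨⟨⟨?_, ?_⟩, hk.2, ?_⟩, hmodk⟩
      · nlinarith
      · have : k + 1 ≤ 2 * Y := hk.1.2
        nlinarith
      · rw [← hmod, hmodk, hb1]
    · intro k _ k' _ h
      simp only [add_left_inj] at h
      exact Nat.eq_of_mul_eq_mul_left (by omega) h
  calc _ ≤ (P.filter (fun p => p % q = b)).card * q.totient := Nat.mul_le_mul_right _ h2
    _ = 2 * (B.card * (P.filter (fun p => p % q = b)).card) := by rw [← hcard]; ring
    _ ≤ 2 * P.card := Nat.mul_le_mul_left _ h1

end

/-! ### From coverings to prime gaps -/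

/-- If every integer of a block of length `Y` lies in one of the classes `-r p (mod p)`,
`p ≤ u` prime, then the Chinese remainder theorem moves the block to a place where all of its
members are composite. By Bertrand's postulate the next prime is at most
`2 * 4 ^ u * (u + 2) ≤ exp (2 * u)`. -/
theorem le_primeGap_of_cover {u : ℝ} (hu : 100 ≤ u) {a Y : ℕ} (hY : 0 < Y) (r : ℕ → ℕ)
    (hcov : ∀ k ∈ Finset.Ico a (a + Y), ∃ p : ℕ, p.Prime ∧ (p : ℝ) ≤ u ∧ p ∣ k + r p) :
    (Y : ℝ) ≤ primeGap (Real.exp (2 * u)) := by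
  classical
  obtain ⟨U, hU⟩ : ∃ U : ℕ, U = ⌊u⌋₊ := ⟨_, rfl⟩
  have hUu : (U : ℝ) ≤ u := by rw [hU]; exact Nat.floor_le (by linarith)
  have hU1 : 1 ≤ U := by rw [hU]; exact Nat.le_floor (by push_cast; linarith)
  set t := (Finset.range (U + 1)).filter Nat.Prime with ht
  obtain ⟨m, hmP, hm⟩ : ∃ m : ℕ, m < primorial U ∧ ∀ p ∈ t, m ≡ a + r p [MOD p] := by
    have hs : ∀ p ∈ t, (fun p : ℕ => p) p ≠ 0 := fun p hp => (Finset.mem_filter.1 hp).2.ne_zero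
    have pp : Set.Pairwise (t : Set ℕ) (Function.onFun Nat.Coprime (fun p : ℕ => p)) := by
      intro p hp p' hp' hne
      exact (Nat.coprime_primes (Finset.mem_filter.1 hp).2 (Finset.mem_filter.1 hp').2).2 hne
    exact ⟨Nat.chineseRemainderOfFinset (fun p => a + r p) (fun p => p) t hs pp,
      Nat.chineseRemainderOfFinset_lt_prod (fun p => a + r p) (fun p => p) hs pp,
      (Nat.chineseRemainderOfFinset (fun p => a + r p) (fun p => p) t hs pp).2⟩
  -- the multiple of the primorial makes `M` exceed every sieving prime, so that a member of the
  -- shifted block divisible by such a prime is not equal to it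
  obtain ⟨M, hM⟩ : ∃ M : ℕ, M = m + primorial U * (U + 1) := ⟨_, rfl⟩
  have hP0 : 0 < primorial U := primorial_pos U
  have hMU : U < M := by rw [hM]; nlinarith
  have hM4 : M ≤ 4 ^ U * (U + 2) := by
    have := primorial_le_four_pow U
    calc M ≤ primorial U * (U + 2) := by rw [hM]; nlinarith
      _ ≤ _ := by gcongr
  have hcomp : ∀ j < Y, ¬ (M + j).Prime := by
    intro j hj hprime
    obtain ⟨p, hp, hpu, hdvd⟩ := hcov (a + j) (Finset.mem_Ico.2 ⟨by omega, by omega⟩)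
    have hpU : p ≤ U := by rw [hU]; exact Nat.le_floor hpu
    have hpt : p ∈ t := Finset.mem_filter.2 ⟨Finset.mem_range.2 (by omega), hp⟩
    have hpP : p ∣ primorial U := Finset.dvd_prod_of_mem (fun p : ℕ => p) hpt
    have h1 : M + j ≡ a + r p + j [MOD p] := by
      have h2 : M ≡ m [MOD p] := by
        rw [hM]
        have : primorial U * (U + 1) ≡ 0 [MOD p] :=
          (Nat.modEq_zero_iff_dvd).2 (hpP.mul_right _)
        simpa using (Nat.ModEq.refl m).add this
      exact (h2.trans (hm p hpt)).add_right j
    have h3 : p ∣ M + j := by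
      rw [h1.dvd_iff (dvd_refl p)]
      rwa [show a + r p + j = a + j + r p by ring]
    have := (Nat.prime_dvd_prime_iff_eq hp hprime).1 h3
    omega
  -- the primes on both sides of the block
  obtain ⟨s, hs, hMs, hs2⟩ := Nat.exists_prime_lt_and_le_two_mul M (by omega)
  have hex : ∃ s, s.Prime ∧ M ≤ s := ⟨s, hs, hMs.le⟩
  set p' := Nat.find hex with hp'
  obtain ⟨hp'p, hMp'⟩ := Nat.find_spec hex
  have hp's : p' ≤ s := Nat.find_min' hex ⟨hs, hMs.le⟩
  have hp'Y : M + Y ≤ p' := by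
    by_contra hlt
    refine hcomp (p' - M) (by omega) ?_
    rwa [show M + (p' - M) = p' by omega]
  have hM2 : 2 < M := by
    have : (100 : ℕ) ≤ U := by rw [hU]; exact Nat.le_floor (by push_cast; linarith)
    omega
  set p := Nat.findGreatest Nat.Prime (M - 1) with hpdef
  have hpp : p.Prime := Nat.findGreatest_spec (P := Nat.Prime) (m := 2) (by omega) Nat.prime_two
  have hpM : p ≤ M - 1 := Nat.findGreatest_le _
  have hbet : ∀ r : ℕ, p < r → r < p' → ¬ r.Prime := by
    intro r hr1 hr2 hr
    rcases lt_or_ge r M with h | h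
    · exact Nat.findGreatest_is_greatest (P := Nat.Prime) hr1 (by omega) hr
    · exact Nat.find_min hex hr2 ⟨hr, h⟩
  have hp'X : (p' : ℝ) ≤ Real.exp (2 * u) := by
    have h1 : p' ≤ 2 * (4 ^ U * (U + 2)) := by omega
    have h2 : (p' : ℝ) ≤ 2 * (4 ^ U * (U + 2)) := by exact_mod_cast h1
    have h4 : (4 : ℝ) ^ U ≤ Real.exp (1.4 * u) := by
      have e : Real.log 4 = 2 * Real.log 2 := by
        rw [show (4 : ℝ) = 2 ^ 2 by norm_num, Real.log_pow]; norm_num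
      rw [← Real.log_le_iff_le_exp (by positivity), Real.log_pow, e]
      have := Real.log_two_lt_d9
      have := Real.log_pos (one_lt_two (α := ℝ))
      nlinarith
    have h5 : 2 * ((U : ℝ) + 2) ≤ Real.exp (0.6 * u) := by
      have := Real.quadratic_le_exp_of_nonneg (show 0 ≤ 0.6 * u by linarith)
      nlinarith
    calc (p' : ℝ) ≤ 4 ^ U * (2 * (U + 2)) := by linarith
      _ ≤ Real.exp (1.4 * u) * Real.exp (0.6 * u) := by gcongr
      _ = Real.exp (2 * u) := by rw [← Real.exp_add]; ring_nf
  have hbdd : BddAbove {d : ℕ | ∃ p p' : ℕ, p.Prime ∧ p'.Prime ∧ p < p' ∧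
      (p' : ℝ) ≤ Real.exp (2 * u) ∧ (∀ r : ℕ, p < r → r < p' → ¬ r.Prime) ∧ d = p' - p} := by
    refine ⟨⌊Real.exp (2 * u)⌋₊, ?_⟩
    rintro d ⟨p, p', _, _, _, h, _, rfl⟩
    exact (Nat.sub_le _ _).trans (Nat.le_floor h)
  have hle : p' - p ≤ primeGap (Real.exp (2 * u)) :=
    le_csSup hbdd ⟨p, p', hpp, hp'p, by omega, hp'X, hbet, rfl⟩
  have : Y ≤ primeGap (Real.exp (2 * u)) := by omega
  exact_mod_cast this

/-! ### The sieve -/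

/-- The most popular class modulo `p` contains at least `1 / p` of `S`. -/
theorem exists_greedy_class (S : Finset ℕ) {p : ℕ} (hp : 0 < p) :
    ∃ r : ℕ, ((S.filter (fun k => ¬ p ∣ k + r)).card : ℝ) ≤ S.card * (1 - (p : ℝ)⁻¹) := by
  classical
  have hfib : S.card = ∑ c ∈ Finset.range p, (S.filter (fun k => k % p = c)).card :=
    Finset.card_eq_sum_card_fiberwise fun k _ => by
      simpa using Nat.mod_lt k hp
  obtain ⟨c, hc, hmax⟩ := Finset.exists_max_image (Finset.range p)
    (fun c => (S.filter (fun k => k % p = c)).card) ⟨0, by simpa using hp⟩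
  rw [Finset.mem_range] at hc
  have h1 : S.card ≤ p * (S.filter (fun k => k % p = c)).card := by
    rw [hfib]
    simpa using Finset.sum_le_card_nsmul _ _ _ hmax
  refine ⟨p - c, ?_⟩
  have h2 : (S.filter (fun k => ¬ p ∣ k + (p - c))).card ≤
      (S.filter (fun k => ¬ k % p = c)).card := by
    refine Finset.card_le_card fun k hk => ?_
    simp only [Finset.mem_filter] at hk ⊢
    refine ⟨hk.1, fun h => hk.2 ?_⟩
    refine ⟨k / p + 1, ?_⟩
    have := Nat.div_add_mod k p
    rw [h] at this
    rw [mul_add, mul_one]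
    omega
  have h3 := Finset.card_filter_add_card_filter_not (s := S) (fun k => k % p = c)
  have hpr : (0 : ℝ) < p := by exact_mod_cast hp
  have h4 : (S.card : ℝ) * (p : ℝ)⁻¹ ≤ (S.filter (fun k => k % p = c)).card := by
    rw [← div_eq_mul_inv, div_le_iff₀ hpr, mul_comm]
    exact_mod_cast h1
  have h5 : ((S.filter (fun k => ¬ p ∣ k + (p - c))).card : ℝ) ≤
      (S.filter (fun k => ¬ k % p = c)).card := by exact_mod_cast h2
  have h6 : ((S.filter (fun k => k % p = c)).card : ℝ) + (S.filter (fun k => ¬ k % p = c)).card =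
      S.card := by exact_mod_cast h3
  linarith

/-- Greedy sieving: one class for each `p ∈ T` can be removed so that the proportion left is at
most `∏ p ∈ T, (1 - 1 / p)`. -/
theorem exists_greedy_classes (S T : Finset ℕ) (hT : ∀ p ∈ T, 0 < p) :
    ∃ r : ℕ → ℕ, ((S.filter (fun k => ∀ p ∈ T, ¬ p ∣ k + r p)).card : ℝ) ≤
      S.card * ∏ p ∈ T, (1 - (p : ℝ)⁻¹) := by
  classical
  induction T using Finset.induction_on with
  | empty => exact ⟨fun _ => 0, by simp⟩
  | insert t T ht ih =>
    obtain ⟨r, hr⟩ := ih fun p hp => hT p (Finset.mem_insert_of_mem hp)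
    have ht0 : 0 < t := hT t (Finset.mem_insert_self _ _)
    obtain ⟨c, hc⟩ := exists_greedy_class (S.filter (fun k => ∀ p ∈ T, ¬ p ∣ k + r p)) ht0
    refine ⟨Function.update r t c, ?_⟩
    have hset : S.filter (fun k => ∀ p ∈ insert t T, ¬ p ∣ k + Function.update r t c p) =
        (S.filter (fun k => ∀ p ∈ T, ¬ p ∣ k + r p)).filter (fun k => ¬ t ∣ k + c) := by
      ext k
      simp only [Finset.mem_filter, Finset.mem_insert, forall_eq_or_imp, Function.update_self,
        and_assoc]
      refine and_congr_right fun _ => ?_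
      rw [and_comm]
      refine and_congr_left fun _ => forall₂_congr fun p hp => ?_
      have hne : p ≠ t := by
        rintro rfl
        exact ht hp
      rw [Function.update_of_ne hne]
    have h1 : (1 : ℝ) ≤ t := by exact_mod_cast ht0
    have h2 : (0 : ℝ) ≤ 1 - (t : ℝ)⁻¹ := by
      have := inv_le_one_of_one_le₀ h1
      linarith
    rw [hset, Finset.prod_insert ht]
    calc _ ≤ _ := hc
      _ ≤ S.card * (∏ p ∈ T, (1 - (p : ℝ)⁻¹)) * (1 - (t : ℝ)⁻¹) := by gcongr
      _ = _ := by ring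

theorem exists_classes_one_by_one (S T : Finset ℕ) (hT : ∀ p ∈ T, 0 < p)
    (hST : S.card ≤ T.card) : ∃ r : ℕ → ℕ, ∀ k ∈ S, ∃ p ∈ T, p ∣ k + r p := by
  classical
  induction S using Finset.induction_on generalizing T with
  | empty => exact ⟨fun _ => 0, by simp⟩
  | insert a S ha ih =>
    rw [Finset.card_insert_of_notMem ha] at hST
    obtain ⟨t, ht⟩ : T.Nonempty := Finset.card_pos.1 (by omega)
    obtain ⟨r, hr⟩ := ih (T.erase t) (fun p hp => hT p (Finset.mem_of_mem_erase hp))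
      (by rw [Finset.card_erase_of_mem ht]; omega)
    refine ⟨Function.update r t ((t - 1) * a), fun k hk => ?_⟩
    rcases Finset.mem_insert.1 hk with rfl | hk
    · refine ⟨t, ht, ?_⟩
      rw [Function.update_self]
      refine ⟨k, ?_⟩
      obtain ⟨s, rfl⟩ : ∃ s, t = s + 1 := ⟨t - 1, by have := hT t ht; omega⟩
      rw [Nat.add_sub_cancel]
      ring
    · obtain ⟨p, hp, hd⟩ := hr k hk
      refine ⟨p, Finset.mem_of_mem_erase hp, ?_⟩
      rwa [Function.update_of_ne (Finset.ne_of_mem_erase hp)]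

/-- For `p` not dividing `q`, the `k` with `p ∣ q * k + b` form a single class modulo `p`. -/
theorem exists_class_of_not_dvd {p q : ℕ} (hp : p.Prime) (hpq : ¬ p ∣ q) (b : ℕ) :
    ∃ r : ℕ, ∀ k, p ∣ q * k + b → p ∣ k + r := by
  have := Fact.mk hp
  have hq : (q : ZMod p) ≠ 0 := by rwa [Ne, ZMod.natCast_eq_zero_iff]
  refine ⟨((b : ZMod p) * (q : ZMod p)⁻¹).val, fun k hk => ?_⟩
  rw [← ZMod.natCast_eq_zero_iff] at hk ⊢
  push_cast at hk ⊢
  rw [ZMod.natCast_zmod_val]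
  have : (q : ZMod p) * (k + b * (q : ZMod p)⁻¹) = 0 := by
    rw [← hk]
    field_simp
  exact (mul_eq_zero.1 this).resolve_left hq

/-- The three-stage sieve covering `[Y, 2 * Y)`. Small primes prime to `q` remove every `k` with
`q * k + b` composite, primes dividing `q` thin out the rest by the factor `φ(q) / q`, and the
remaining large primes remove one element each. -/
theorem exists_cover {q b Y W : ℕ} {u : ℝ} (hq : 2 ≤ q) (hY : 0 < Y) (hb0 : 0 < b) (hbq : b < q)
    (hb : b.Coprime q) (hW : W = Nat.sqrt (2 * (q * Y))) (hqW : q ≤ W) (hWu : (W : ℝ) ≤ u)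
    (hN : (((Finset.Ico Y (2 * Y)).filter (fun k => (q * k + b).Prime)).card : ℝ) *
      (q.totient / q) + W ≤ Nat.primeCounting ⌊u⌋₊) :
    ∃ r : ℕ → ℕ, ∀ k ∈ Finset.Ico Y (Y + Y), ∃ p : ℕ, p.Prime ∧ (p : ℝ) ≤ u ∧ p ∣ k + r p := by
  classical
  have h1 : ∀ p : ℕ, ∃ r : ℕ, p.Prime → ¬ p ∣ q → ∀ k, p ∣ q * k + b → p ∣ k + r := by
    intro p
    by_cases h : p.Prime ∧ ¬ p ∣ q
    · obtain ⟨r, hr⟩ := exists_class_of_not_dvd h.1 h.2 b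
      exact ⟨r, fun _ _ => hr⟩
    · exact ⟨0, fun h1 h2 => absurd ⟨h1, h2⟩ h⟩
  choose r1 hr1 using h1
  set S := (Finset.Ico Y (2 * Y)).filter (fun k => (q * k + b).Prime) with hS
  obtain ⟨r2, hr2⟩ := exists_greedy_classes S q.primeFactors
    fun p hp => (Nat.prime_of_mem_primeFactors hp).pos
  set S2 := S.filter (fun k => ∀ p ∈ q.primeFactors, ¬ p ∣ k + r2 p) with hS2
  set T := (Finset.Ioc W ⌊u⌋₊).filter Nat.Prime with hT
  have hTcard : Nat.primeCounting ⌊u⌋₊ ≤ T.card + W := by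
    rw [← Nat.primesLE_card_eq_primeCounting]
    have hsub : Nat.primesLE ⌊u⌋₊ ⊆ T ∪ Finset.Ioc 0 W := by
      intro p hp
      rw [Nat.mem_primesLE] at hp
      have := hp.2.pos
      simp only [hT, Finset.mem_union, Finset.mem_filter, Finset.mem_Ioc]
      rcases lt_or_ge W p with h | h
      · exact Or.inl ⟨⟨h, hp.1⟩, hp.2⟩
      · exact Or.inr ⟨this, h⟩
    calc _ ≤ (T ∪ Finset.Ioc 0 W).card := Finset.card_le_card hsub
      _ ≤ T.card + (Finset.Ioc 0 W).card := Finset.card_union_le _ _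
      _ = _ := by simp
  have hprod : ∏ p ∈ q.primeFactors, (1 - (p : ℝ)⁻¹) = q.totient / q := by
    have h := Nat.totient_eq_mul_prod_factors q
    have hq0 : (q : ℝ) ≠ 0 := by positivity
    rw [eq_div_iff hq0, mul_comm]
    have := congrArg (fun x : ℚ => (x : ℝ)) h
    push_cast at this
    exact this.symm
  have hcard : S2.card ≤ T.card := by
    rw [hprod] at hr2
    have : (Nat.primeCounting ⌊u⌋₊ : ℝ) ≤ T.card + W := by exact_mod_cast hTcard
    have : (S2.card : ℝ) ≤ T.card := by linarith
    exact_mod_cast this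
  obtain ⟨r3, hr3⟩ := exists_classes_one_by_one S2 T
    (fun p hp => (Finset.mem_filter.1 hp).2.pos) hcard
  refine ⟨fun p => if p ∣ q then r2 p else if p ≤ W then r1 p else r3 p, fun k hk => ?_⟩
  rw [← two_mul] at hk
  have hk' := Finset.mem_Ico.1 hk
  have hu0 : 0 ≤ u := le_trans (by positivity) hWu
  by_cases hpr : (q * k + b).Prime
  · have hkS : k ∈ S := Finset.mem_filter.2 ⟨hk, hpr⟩
    by_cases h2 : ∀ p ∈ q.primeFactors, ¬ p ∣ k + r2 p
    · obtain ⟨p, hp, hd⟩ := hr3 k (Finset.mem_filter.2 ⟨hkS, h2⟩)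
      obtain ⟨hp1, hp2⟩ := Finset.mem_filter.1 hp
      rw [Finset.mem_Ioc] at hp1
      have hpq : ¬ p ∣ q := fun h => by
        have := Nat.le_of_dvd (by omega) h
        omega
      refine ⟨p, hp2, (Nat.le_floor_iff hu0).1 hp1.2, ?_⟩
      beta_reduce
      rwa [if_neg hpq, if_neg (by omega)]
    · push Not at h2
      obtain ⟨p, hp, hd⟩ := h2
      have hpq := Nat.dvd_of_mem_primeFactors hp
      refine ⟨p, Nat.prime_of_mem_primeFactors hp, ?_, ?_⟩
      · refine le_trans ?_ hWu
        exact_mod_cast (Nat.le_of_dvd (by omega) hpq).trans hqW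
      · beta_reduce
        rwa [if_pos hpq]
  · have hn1 : q * k + b ≠ 1 := by nlinarith
    have hm := Nat.minFac_prime hn1
    have hd := Nat.minFac_dvd (q * k + b)
    set p := (q * k + b).minFac with hp
    have hpq : ¬ p ∣ q := by
      intro h
      have hpb : p ∣ b := (Nat.dvd_add_right (h.mul_right k)).1 hd
      have := Nat.dvd_gcd hpb h
      rw [hb] at this
      exact hm.one_lt.ne' (Nat.dvd_one.1 this)
    have hpW : p ≤ W := by
      rw [hW, Nat.le_sqrt']
      have h1 := Nat.minFac_sq_le_self (by positivity : 0 < q * k + b) hpr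
      have h2 : q * k + b ≤ 2 * (q * Y) := by
        have : k + 1 ≤ 2 * Y := hk'.2
        nlinarith
      exact h1.trans h2
    refine ⟨p, hm, le_trans (by exact_mod_cast hpW) hWu, ?_⟩
    beta_reduce
    rw [if_neg hpq, if_pos hpW]
    exact hr1 p hm hpq k hd

/-! ### Choice of parameters -/

/-- A Chebyshev bound. -/
theorem primeCounting_lower {u : ℝ} (hu : 1000 ≤ u) :
    u / (2 * Real.log u) ≤ Nat.primeCounting ⌊u⌋₊ := by
  refine le_trans ?_ (Chebyshev.pi_ge' (x := u) (by linarith))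
  have hl : 0 < Real.log u := Real.log_pos (by linarith)
  rw [← div_div]
  gcongr
  have h2 := Real.log_two_gt_d9
  have h100 := Real.log_le_sub_one_of_pos (show (0 : ℝ) < 100 by norm_num)
  have hx := Real.log_le_sub_one_of_pos (show 0 < (u + 2) / 100 by linarith)
  rw [Real.log_div (by linarith) (by norm_num)] at hx
  nlinarith

/-- The main case `δ log q ≪ 1`. The sieve covers a block of length `Y` with primes up to
`u = 4000 δ Y log q`: it has to treat at most `24 δ Y` numbers individually, and there are at least
`u / (2 log u) ≥ 25 δ Y` primes up to `u`, since `log u ≤ 80 log q`. -/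
theorem gap_of_small_delta {q : ℕ} [NeZero q] {χ : DirichletCharacter ℂ q} (hq : 10000 ≤ q)
    (hχ : χ ≠ 1) (hreal : ∀ a : ZMod q, (χ a).im = 0) {δ : ℝ} (hδ0 : 0 < δ) (hδ1 : δ < 1)
    (hzero : χ.LFunction (1 - (δ : ℂ)) = 0) (hsmall : 4000 * δ * Real.log q ≤ 1) :
    ∃ u : ℝ, 2 ≤ u ∧ Real.log q ≤ Real.log u ∧ Real.log u ≤ 80 * Real.log q ∧
      (primeGap (Real.exp (2 * u)) : ℝ) ≥ 1 / 8000 * u / (δ * Real.log u) := by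
  have hq0 : 0 < q := by omega
  have hqr : (10000 : ℝ) ≤ q := by exact_mod_cast hq
  have hlog : 1 ≤ Real.log q := by
    rw [Real.le_log_iff_exp_le (by linarith)]
    linarith [Real.exp_one_lt_d9]
  have hf := isRealChar_realChar hχ hreal
  have hL : Tendsto (fun N => ∑ n ∈ Finset.Ioc 0 N, realChar χ n * (n : ℝ)⁻¹) atTop
      (𝓝 (χ.LFunction ((1 : ℝ) : ℂ)).re) := by
    have := tendsto_real hχ hreal (σ := 1) one_pos
    simpa only [Real.rpow_neg_one] using this
  have h0 : Tendsto (fun N => ∑ n ∈ Finset.Ioc 0 N, realChar χ n * (n : ℝ) ^ (-(1 - δ))) atTop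
      (𝓝 0) := by
    have := tendsto_real hχ hreal (σ := 1 - δ) (by linarith)
    have e : ((1 - δ : ℝ) : ℂ) = 1 - (δ : ℂ) := by push_cast; ring
    rwa [e, hzero, Complex.zero_re] at this
  have hδl := delta_lower hq0 hf hδ0 hδ1 hL h0
  have hδq : 1 ≤ δ * (600 * (q : ℝ) ^ 4) := by rwa [div_le_iff₀ (by positivity)] at hδl
  have hprimes := primeSum_le hq hf hδ0 hδ1 hL h0 (by nlinarith)
  obtain ⟨Y, hY1, hY2, hcount⟩ := exists_dyadic_scale hq
    (fun p => p.Prime ∧ realChar χ p = 1) hδ0 hprimes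
  obtain ⟨b, hb0, hbq, hb, hN⟩ := exists_good_class (by omega) hχ hreal Y
  have hY1r : (q : ℝ) ^ 39 ≤ Y := by exact_mod_cast hY1
  have hY0 : 0 < Y := lt_of_lt_of_le (by positivity) hY1
  have hY0r : (0 : ℝ) < Y := by exact_mod_cast hY0
  -- `Y ≥ q ^ 39` is large compared with the powers of `1 / δ ≤ 600 * q ^ 4` that occur
  have hδY : 2 * (q : ℝ) ≤ δ ^ 2 * Y := by
    have h1 : 1 ≤ δ ^ 2 * (360000 * (q : ℝ) ^ 8) := by nlinarith
    have h2 : 2 * 360000 ≤ (q : ℝ) ^ 30 :=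
      le_trans (by norm_num) (pow_le_pow_left₀ (by norm_num) hqr 30)
    have h3 : 2 * (q : ℝ) * (360000 * (q : ℝ) ^ 8) ≤ (q : ℝ) ^ 39 := by
      calc 2 * (q : ℝ) * (360000 * (q : ℝ) ^ 8) = (2 * 360000) * (q : ℝ) ^ 9 := by ring
        _ ≤ (q : ℝ) ^ 30 * (q : ℝ) ^ 9 := by gcongr
        _ = (q : ℝ) ^ 39 := by ring
    calc 2 * (q : ℝ) ≤ 2 * (q : ℝ) * (δ ^ 2 * (360000 * (q : ℝ) ^ 8)) :=
          le_mul_of_one_le_right (by positivity) h1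
      _ = δ ^ 2 * (2 * (q : ℝ) * (360000 * (q : ℝ) ^ 8)) := by ring
      _ ≤ δ ^ 2 * Y := by
          gcongr
          exact h3.trans hY1r
  have hδY' : 2 * (q : ℝ) ≤ δ * Y := by
    refine hδY.trans ?_
    gcongr
    nlinarith
  obtain ⟨W, hW⟩ : ∃ W : ℕ, W = Nat.sqrt (2 * (q * Y)) := ⟨_, rfl⟩
  have hqW : q ≤ W := by
    rw [hW, Nat.le_sqrt]
    have : q ≤ Y := le_trans (Nat.le_self_pow (by norm_num) q) hY1
    nlinarith
  have hWδ : (W : ℝ) ≤ δ * Y := by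
    have h1 : (W : ℝ) ^ 2 ≤ 2 * (q * Y) := by
      have := Nat.sqrt_le' (2 * (q * Y))
      rw [← hW] at this
      exact_mod_cast this
    refine le_of_sq_le_sq ?_ (by positivity)
    nlinarith
  obtain ⟨u, hu⟩ : ∃ u : ℝ, u = 4000 * δ * Y * Real.log q := ⟨_, rfl⟩
  have huY : u ≤ Y := by
    have : u = (4000 * δ * Real.log q) * Y := by rw [hu]; ring
    rw [this]
    exact mul_le_of_le_one_left hY0r.le hsmall
  have huδ : δ * Y ≤ u := by
    rw [hu]
    have : 0 < δ * Y := by positivity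
    nlinarith
  have hu1 : (10000 : ℝ) ≤ u := by linarith
  have hlu1 : Real.log q ≤ Real.log u := Real.log_le_log (by linarith) (by linarith)
  have hlu2 : Real.log u ≤ 80 * Real.log q := by
    have h1 : u ≤ (q : ℝ) ^ 80 := by
      have : Y ≤ q ^ 80 := by nlinarith
      exact huY.trans (by exact_mod_cast this)
    have h2 := Real.log_le_log (by linarith) h1
    rwa [Real.log_pow] at h2
  have hlu0 : 0 < Real.log u := by linarith
  have hcov : (((Finset.Ico Y (2 * Y)).filter (fun k => (q * k + b).Prime)).card : ℝ) *
      (q.totient / q) + W ≤ Nat.primeCounting ⌊u⌋₊ := by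
    have h1 : (((Finset.Ico Y (2 * Y)).filter (fun k => (q * k + b).Prime)).card : ℝ) *
        (q.totient / q) ≤ 24 * δ * Y := by
      rw [← mul_div_assoc, div_le_iff₀ (by positivity)]
      have h2 : (((Finset.Ico Y (2 * Y)).filter (fun k => (q * k + b).Prime)).card : ℝ) *
        q.totient ≤ 2 * ((Finset.Ioc (q * Y) (2 * (q * Y))).filter
        (fun p => p.Prime ∧ realChar χ p = 1)).card := by exact_mod_cast hN
      push_cast at hcount
      linarith
    have h3 := primeCounting_lower (u := u) (by linarith)
    have h4 : 25 * δ * Y ≤ u / (2 * Real.log u) := by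
      rw [le_div_iff₀ (by positivity)]
      calc 25 * δ * Y * (2 * Real.log u) ≤ 25 * δ * Y * (2 * (80 * Real.log q)) := by gcongr
        _ = u := by rw [hu]; ring
    linarith
  obtain ⟨r, hr⟩ := exists_cover (by omega) hY0 hb0 hbq hb hW hqW (hWδ.trans huδ) hcov
  have hgap := le_primeGap_of_cover (by linarith) hY0 r hr
  refine ⟨u, by linarith, hlu1, hlu2, le_trans ?_ hgap⟩
  rw [div_le_iff₀ (by positivity)]
  have : u ≤ 4000 * δ * Y * Real.log u :=
    hu.le.trans (mul_le_mul_of_nonneg_left hlu1 (by positivity))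
  have : 0 < Y * (δ * Real.log u) := by positivity
  linarith

/-- If the zero is at distance `≫ 1 / log q` from `1`, the trivial gap of length `≫ u` below
`exp (2 * u)` suffices, already for `u = q`. -/
theorem gap_of_large_delta {q : ℕ} (hq : 10000 ≤ q) {δ : ℝ} (hδ0 : 0 < δ)
    (hlarge : 1 < 4000 * δ * Real.log q) :
    (primeGap (Real.exp (2 * q)) : ℝ) ≥ 1 / 8000 * q / (δ * Real.log q) := by
  have hqr : (10000 : ℝ) ≤ q := by exact_mod_cast hq
  have hlog : 0 < Real.log q := Real.log_pos (by linarith)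
  have hgap := le_primeGap_of_cover (u := q) (by linarith) (a := 2) (Y := q - 2) (by omega)
    (fun _ => 0) (fun k hk => by
      rw [Finset.mem_Ico] at hk
      refine ⟨k.minFac, Nat.minFac_prime (by omega), ?_, by simpa using Nat.minFac_dvd k⟩
      exact_mod_cast (Nat.minFac_le (by omega)).trans (by omega))
  refine le_trans ?_ hgap
  rw [Nat.cast_sub (by omega), div_le_iff₀ (by positivity)]
  push_cast
  nlinarith

theorem ne_one_of_isPrimitive {q : ℕ} [NeZero q] (hq : 2 ≤ q) {χ : DirichletCharacter ℂ q}
    (hχ : χ.IsPrimitive) : χ ≠ 1 := by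
  rintro rfl
  rw [DirichletCharacter.IsPrimitive, DirichletCharacter.conductor_one] at hχ
  omega

/-- **Theorem (main).** There are absolute constants `q₀`, `c₁ > 0`, `c₂ > 0`, `C > 0`
such that: if `χ` is a real primitive Dirichlet character of conductor `q ≥ q₀` and
`L(1-δ, χ) = 0` for some `0 < δ < 1`, then there is a real `u ≥ 2` with
`c₁ log q ≤ log u ≤ c₂ log q` and `G(e^{2u}) ≥ C·u/(δ log u)`. -/
theorem exceptional_zero_implies_large_gaps :
    ∃ (q₀ : ℕ) (c₁ c₂ C : ℝ), 0 < c₁ ∧ 0 < c₂ ∧ 0 < C ∧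
      ∀ (q : ℕ) [NeZero q], q₀ ≤ q →
        ∀ (χ : DirichletCharacter ℂ q),
          χ.IsPrimitive →
          (∀ a : ZMod q, (χ a).im = 0) →
          ∀ δ : ℝ, 0 < δ → δ < 1 →
          χ.LFunction (1 - (δ : ℂ)) = 0 →
          ∃ u : ℝ, 2 ≤ u ∧
            c₁ * Real.log q ≤ Real.log u ∧ Real.log u ≤ c₂ * Real.log q ∧
            (primeGap (Real.exp (2 * u)) : ℝ) ≥ C * u / (δ * Real.log u) := by
  refine ⟨10000, 1, 80, 1 / 8000, by norm_num, by norm_num, by norm_num, ?_⟩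
  intro q _ hq χ hχ hreal δ hδ0 hδ1 hzero
  have hqr : (10000 : ℝ) ≤ q := by exact_mod_cast hq
  have hlog : 0 < Real.log q := Real.log_pos (by linarith)
  rcases le_or_gt (4000 * δ * Real.log q) 1 with hsmall | hlarge
  · simpa only [one_mul] using gap_of_small_delta hq
      (ne_one_of_isPrimitive (by omega) hχ) hreal hδ0 hδ1 hzero hsmall
  · exact ⟨q, by linarith, by linarith, by linarith, gap_of_large_delta hq hδ0 hlarge⟩
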